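/- arXiv:1706.09675 — 2 statements merged into one kernel-verified Lean document; each statement's English description precedes it below -/
import Mathlib

section
/- Let H be a simple graph on 2n vertices with no isolated vertices that has a minimal vertex cover consisting of n vertices. Then H is a Cohen–Macaulay graph (i.e. R/I(H) is Cohen–Macaulay, where R is the polynomial ring on the vertices of H over a field k) if and only if H is a twin-free very well-covered graph. -/
open MvPolynomial

/-- The depth of the `R`-module `M` with respect to the ideal `J`: the supremum of
lengths of `M`-regular sequences consisting of elements of `J`. -/
noncomputable def idealDepth {R : Type*} [CommRing R] (J : Ideal R)
    (M : Type*) [AddCommGroup M] [Module R M] : ℕ :=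
  sSup {d : ℕ | ∃ rs : List R, rs.length = d ∧ (∀ r ∈ rs, r ∈ J) ∧
    RingTheory.Sequence.IsRegular M rs}

/-- The irrelevant maximal homogeneous ideal `(x₁, …, xₙ)` of the polynomial ring. -/
noncomputable def mxIdeal (k : Type*) [Field k] (n : ℕ) : Ideal (MvPolynomial (Fin n) k) :=
  Ideal.span (Set.range MvPolynomial.X)

/-- `depth R/I`, the depth of the quotient module with respect to the maximal
homogeneous ideal. -/
noncomputable def pdepth {k : Type*} [Field k] {n : ℕ}
    (I : Ideal (MvPolynomial (Fin n) k)) : ℕ :=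
  idealDepth (mxIdeal k n) (MvPolynomial (Fin n) k ⧸ I)

/-- `p` is homogeneous of degree `d ∈ ℤ` (where `0` is homogeneous of any degree). -/
def HomogOfDeg {k : Type*} [Field k] {n : ℕ} (p : MvPolynomial (Fin n) k) (d : ℤ) : Prop :=
  p = 0 ∨ ∃ m : ℕ, (m : ℤ) = d ∧ p.IsHomogeneous m

/-- A finite graded free resolution of `R/I`: free modules `Fᵢ = ⊕_j R(-D i j)` (of rank
`b i`, zero for `i > len`), differentials given by matrices `A i : Fᵢ₊₁ → Fᵢ` whose entries
are homogeneous of the appropriate degrees, and an augmentation `F₀ → R/I` given by the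
homogeneous column `v`, the whole complex being exact. -/
structure GradedFreeRes {k : Type*} [Field k] {n : ℕ}
    (I : Ideal (MvPolynomial (Fin n) k)) where
  len : ℕ
  b : ℕ → ℕ
  hb : ∀ i : ℕ, len < i → b i = 0
  D : (i : ℕ) → Fin (b i) → ℤ
  A : (i : ℕ) → Matrix (Fin (b i)) (Fin (b (i+1))) (MvPolynomial (Fin n) k)
  v : Fin (b 0) → MvPolynomial (Fin n) k
  hv : ∀ r, HomogOfDeg (v r) (D 0 r)
  hA : ∀ (i : ℕ) r c, HomogOfDeg (A i r c) (D (i+1) c - D i r)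
  haug : Function.Surjective
    (fun w : Fin (b 0) → MvPolynomial (Fin n) k => Ideal.Quotient.mk I (∑ r, w r * v r))
  hex0 : Function.Exact ((A 0).mulVec)
    (fun w : Fin (b 0) → MvPolynomial (Fin n) k => Ideal.Quotient.mk I (∑ r, w r * v r))
  hex : ∀ i : ℕ, Function.Exact ((A (i+1)).mulVec) ((A i).mulVec)

/-- The Castelnuovo–Mumford regularity `reg R/I`: the least `r` such that some finite
graded free resolution of `R/I` has all its `i`-th twists `≤ r + i`; equivalently (via the
minimal free resolution) `reg R/I = max { j - i : β_{i,j}(R/I) ≠ 0 }`. -/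
noncomputable def regQuot {k : Type*} [Field k] {n : ℕ}
    (I : Ideal (MvPolynomial (Fin n) k)) : ℤ :=
  sInf {r : ℤ | ∃ F : GradedFreeRes I, ∀ (i : ℕ) (j : Fin (F.b i)), F.D i j - (i : ℤ) ≤ r}

/-- The regularity of a (nonzero) homogeneous ideal: `reg I = reg R/I + 1`. -/
noncomputable def regIdeal {k : Type*} [Field k] {n : ℕ}
    (I : Ideal (MvPolynomial (Fin n) k)) : ℤ :=
  regQuot I + 1

/-- An ideal is homogeneous if it is generated by homogeneous polynomials. -/
def IsHomogeneousIdeal {k : Type*} [Field k] {n : ℕ}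
    (I : Ideal (MvPolynomial (Fin n) k)) : Prop :=
  ∃ T : Set (MvPolynomial (Fin n) k), (∀ p ∈ T, ∃ d : ℕ, p.IsHomogeneous d) ∧ I = Ideal.span T

/-- A monomial ideal: an ideal generated by monomials. -/
def IsMonomialIdeal {k : Type*} [Field k] {n : ℕ}
    (I : Ideal (MvPolynomial (Fin n) k)) : Prop :=
  ∃ T : Set (Fin n →₀ ℕ), I = Ideal.span ((fun m => monomial m (1 : k)) '' T)


/-- The edge ideal of a simple graph. -/
noncomputable def edgeIdealG (k : Type*) [Field k] {m : ℕ} (G : SimpleGraph (Fin m)) :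
    Ideal (MvPolynomial (Fin m) k) :=
  Ideal.span {p | ∃ i j : Fin m, G.Adj i j ∧ p = MvPolynomial.X i * MvPolynomial.X j}

/-- `C` is a vertex cover of `G`. -/
def IsVertexCover {m : ℕ} (G : SimpleGraph (Fin m)) (C : Finset (Fin m)) : Prop :=
  ∀ v w : Fin m, G.Adj v w → v ∈ C ∨ w ∈ C

/-- `C` is a minimal vertex cover of `G`. -/
def IsMinimalVertexCover {m : ℕ} (G : SimpleGraph (Fin m)) (C : Finset (Fin m)) : Prop :=
  IsVertexCover G C ∧ ∀ C' ⊆ C, IsVertexCover G C' → C' = C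


section CommAlg

/-- Weakly regular sequence on `R/K`, in terms of ideals. -/
def WReg {R : Type*} [CommRing R] : Ideal R → List R → Prop
  | _, [] => True
  | K, x :: l => (∀ a, x * a ∈ K → a ∈ K) ∧ WReg (K ⊔ Ideal.span {x}) l

/-- `P` is an associated prime of `R/K`. -/
def AssP {R : Type*} [CommRing R] (K P : Ideal R) : Prop :=
  P.IsPrime ∧ ∃ z, ∀ r, r ∈ P ↔ r * z ∈ K

theorem AssP.exists_of_notMem {R : Type*} [CommRing R] [IsNoetherianRing R] {K : Ideal R} {y : R}
    (hy : y ∉ K) : ∃ P, AssP K P ∧ ∀ r, r * y ∈ K → r ∈ P := by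
  obtain ⟨P, hP, hle⟩ := exists_le_isAssociatedPrime_of_isNoetherianRing R (M := R ⧸ K)
    (Ideal.Quotient.mk K y) (by rwa [Ne, Ideal.Quotient.eq_zero_iff_mem])
  rw [isAssociatedPrime_iff] at hP
  obtain ⟨hp, w, hw⟩ := hP
  obtain ⟨z, rfl⟩ := Ideal.Quotient.mk_surjective w
  refine ⟨P, ⟨hp, z, fun r => ?_⟩, fun r hr => hle ?_⟩
  · rw [hw, Submodule.mem_colon_singleton, Submodule.mem_bot, ← Ideal.Quotient.eq_zero_iff_mem,
      map_mul]
    rfl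
  · rw [Submodule.mem_colon_singleton, Submodule.mem_bot]
    rw [← Ideal.Quotient.eq_zero_iff_mem, map_mul] at hr
    exact hr

theorem mem_sup_span_iff {R : Type*} [CommRing R] {K : Ideal R} {x a : R} :
    a ∈ K ⊔ Ideal.span {x} ↔ ∃ k ∈ K, ∃ b, a = k + x * b := by
  rw [Submodule.mem_sup]
  constructor
  · rintro ⟨k, hk, z, hz, rfl⟩
    obtain ⟨b, rfl⟩ := Ideal.mem_span_singleton'.1 hz
    exact ⟨k, hk, b, by ring⟩
  · rintro ⟨k, hk, b, rfl⟩
    exact ⟨k, hk, x * b, Ideal.mem_span_singleton'.2 ⟨b, by ring⟩, rfl⟩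

theorem AssP.le {R : Type*} [CommRing R] {K P : Ideal R} (h : AssP K P) : K ≤ P := by
  obtain ⟨_, z, hz⟩ := h
  intro r hr
  rw [hz]
  exact K.mul_mem_right _ hr

theorem AssP.notMem {R : Type*} [CommRing R] {K P : Ideal R} (h : AssP K P) {x : R}
    (hx : ∀ a, x * a ∈ K → a ∈ K) : x ∉ P := by
  obtain ⟨hp, z, hz⟩ := h
  intro hxP
  have := hx z ((hz x).1 hxP)
  apply hp.ne_top
  rw [Ideal.eq_top_iff_one, hz]
  simpa using this

theorem AssP.step {S : Type*} [CommRing S] [IsLocalRing S] [IsNoetherianRing S] {K P : Ideal S}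
    (h : AssP K P) {x : S} (hxm : x ∈ IsLocalRing.maximalIdeal S)
    (hx : ∀ a, x * a ∈ K → a ∈ K) :
    ∃ Q, AssP (K ⊔ Ideal.span {x}) Q ∧ P ⊔ Ideal.span {x} ≤ Q := by
  obtain ⟨hp, z, hz⟩ := h
  let N : Ideal S := K.colon (P : Set S)
  have hN : ∀ y, y ∈ N ↔ ∀ r ∈ P, y * r ∈ K := fun y => by
    simp [N, Submodule.mem_colon]
  have hzN : z ∈ N := by
    rw [hN]; intro r hr
    rw [mul_comm]; exact (hz r).1 hr
  have hzK : z ∉ K := by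
    intro hzK
    apply hp.ne_top
    rw [Ideal.eq_top_iff_one, hz]
    simpa using hzK
  have hex : ∃ y ∈ N, y ∉ K ⊔ Ideal.span {x} := by
    by_contra! hcon
    apply hzK
    have : N ≤ K := by
      apply Submodule.le_of_le_smul_of_le_jacobson_bot (I := Ideal.span {x})
        (IsNoetherian.noetherian N)
      · rw [IsLocalRing.jacobson_eq_maximalIdeal _ bot_ne_top]
        rwa [Ideal.span_singleton_le_iff_mem]
      · intro y hy
        obtain ⟨k, hk, b, rfl⟩ := mem_sup_span_iff.1 (hcon y hy)
        apply Submodule.add_mem_sup hk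
        apply Submodule.smul_mem_smul (Ideal.mem_span_singleton_self x)
        rw [hN] at hy ⊢
        intro r hr
        apply hx
        have := K.sub_mem (hy r hr) (K.mul_mem_right r hk)
        convert this using 1
        ring
    exact this hzN
  obtain ⟨y, hyN, hy⟩ := hex
  obtain ⟨Q, hQ, hle⟩ := AssP.exists_of_notMem hy
  refine ⟨Q, hQ, sup_le ?_ ?_⟩
  · intro r hr
    apply hle
    rw [mul_comm]
    exact Ideal.mem_sup_left ((hN y).1 hyN r hr)
  · rw [Ideal.span_singleton_le_iff_mem]
    apply hle
    exact Ideal.mem_sup_right (Ideal.mul_mem_right _ _ (Ideal.mem_span_singleton_self x))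

theorem dim_mono {R : Type*} [CommRing R] {I J : Ideal R} (h : I ≤ J) :
    ringKrullDim (R ⧸ J) ≤ ringKrullDim (R ⧸ I) :=
  ringKrullDim_le_of_surjective (Ideal.Quotient.factor h) (Ideal.Quotient.factor_surjective h)

theorem dim_succ_le {R : Type*} [CommRing R] {Q : Ideal R} {x : R}
    (hx : ∀ a, x * a ∈ Q → a ∈ Q) :
    ringKrullDim (R ⧸ (Q ⊔ Ideal.span {x})) + 1 ≤ ringKrullDim (R ⧸ Q) := by
  apply ringKrullDim_succ_le_of_surjective (Ideal.Quotient.factor (le_sup_left))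
    (Ideal.Quotient.factor_surjective _) (r := Ideal.Quotient.mk Q x)
  · rw [mem_nonZeroDivisors_iff_right]
    intro a ha
    obtain ⟨a, rfl⟩ := Ideal.Quotient.mk_surjective a
    rw [← map_mul, Ideal.Quotient.eq_zero_iff_mem] at ha
    rw [Ideal.Quotient.eq_zero_iff_mem]
    exact hx a (by rwa [mul_comm])
  · rw [Ideal.Quotient.factor_mk, Ideal.Quotient.eq_zero_iff_mem]
    exact Ideal.mem_sup_right (Ideal.mem_span_singleton_self x)

theorem length_le_dim {S : Type*} [CommRing S] [IsLocalRing S] [IsNoetherianRing S] :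
    ∀ (l : List S) (K P : Ideal S), (∀ x ∈ l, x ∈ IsLocalRing.maximalIdeal S) → WReg K l →
      AssP K P → (l.length : WithBot ℕ∞) ≤ ringKrullDim (S ⧸ P)
  | [], K, P, _, _, hP => by
    have := Ideal.Quotient.nontrivial_iff.2 hP.1.ne_top
    simpa using ringKrullDim_nonneg_of_nontrivial
  | x :: l, K, P, hm, hl, hP => by
    obtain ⟨Q, hQ, hle⟩ := hP.step (hm x (by simp)) hl.1
    have ih := length_le_dim l _ Q (fun y hy => hm y (by simp [hy])) hl.2 hQ
    have hxP := hP.notMem hl.1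
    have hp := hP.1
    refine le_trans ?_ (dim_succ_le (x := x) fun a ha => (hp.mem_or_mem ha).resolve_left hxP)
    rw [List.length_cons, Nat.cast_add, Nat.cast_one]
    gcongr
    exact ih.trans (dim_mono hle)

theorem length_le_dim' {S : Type*} [CommRing S] [IsLocalRing S] [IsNoetherianRing S]
    (l : List S) (K J : Ideal S) (hm : ∀ x ∈ l, x ∈ IsLocalRing.maximalIdeal S) (hl : WReg K l)
    (y : S) (hy : y ∉ K) (hJ : ∀ r ∈ J, r * y ∈ K) :
    (l.length : WithBot ℕ∞) ≤ ringKrullDim (S ⧸ J) := by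
  obtain ⟨P, hP, hle⟩ := AssP.exists_of_notMem hy
  exact (length_le_dim l K P hm hl hP).trans (dim_mono fun r hr => hle r (hJ r hr))

/-- Saturation of an ideal with respect to an element. -/
def satIdeal {R : Type*} [CommRing R] (K : Ideal R) (x : R) : Ideal R where
  carrier := {f | ∃ n : ℕ, x ^ n * f ∈ K}
  zero_mem' := ⟨0, by simp⟩
  add_mem' := by
    rintro a b ⟨n, hn⟩ ⟨m, hm⟩
    refine ⟨n + m, ?_⟩
    have := K.add_mem (K.mul_mem_left (x ^ m) hn) (K.mul_mem_left (x ^ n) hm)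
    convert this using 1
    ring
  smul_mem' := by
    rintro c a ⟨n, hn⟩
    refine ⟨n, ?_⟩
    have := K.mul_mem_left c hn
    convert this using 1
    simp only [smul_eq_mul]; ring

theorem pow_reg {R : Type*} [CommRing R] {K : Ideal R} {x : R}
    (hx : ∀ a, x * a ∈ K → a ∈ K) (n : ℕ) (a : R) (h : x ^ n * a ∈ K) : a ∈ K := by
  induction n with
  | zero => simpa using h
  | succ n ih => exact ih (hx _ (by rw [← mul_assoc, ← pow_succ']; exact h))

/-- A version of Hartshorne's connectedness theorem. -/
theorem connectedness {S : Type*} [CommRing S] [IsLocalRing S] [IsNoetherianRing S] :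
    ∀ (l : List S) (K K₁ K₂ P₁ P₂ : Ideal S), (∀ x ∈ l, x ∈ IsLocalRing.maximalIdeal S) →
      WReg K l → K = K₁ ⊓ K₂ → AssP K P₁ → AssP K P₂ → K₁ ≤ P₁ → K₂ ≤ P₂ →
      (l.length : WithBot ℕ∞) ≤ ringKrullDim (S ⧸ (K₁ ⊔ K₂)) + 1 := by
  intro l
  induction l with
  | nil =>
    intro K K₁ K₂ P₁ P₂ hm hl hK hP₁ hP₂ h₁ h₂
    have hne : K₁ ⊔ K₂ ≠ ⊤ := by
      have := sup_le (h₁.trans (IsLocalRing.le_maximalIdeal hP₁.1.ne_top))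
        (h₂.trans (IsLocalRing.le_maximalIdeal hP₂.1.ne_top))
      exact ne_top_of_le_ne_top (IsLocalRing.maximalIdeal.isMaximal S).ne_top this
    have := Ideal.Quotient.nontrivial_iff.2 hne
    have h := ringKrullDim_nonneg_of_nontrivial (R := S ⧸ (K₁ ⊔ K₂))
    simp only [List.length_nil, Nat.cast_zero]
    exact add_nonneg h zero_le_one
  | cons x l ihl =>
    intro K K₁ K₂ P₁ P₂ hm hl hK hP₁ hP₂ h₁ h₂
    have hx := hl.1
    obtain ⟨L₁, hL₁⟩ : ∃ L, L = satIdeal K₁ x := ⟨_, rfl⟩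
    obtain ⟨L₂, hL₂⟩ : ∃ L, L = satIdeal K₂ x := ⟨_, rfl⟩
    have hreg : ∀ (K : Ideal S) a, x * a ∈ satIdeal K x → a ∈ satIdeal K x := by
      rintro K a ⟨n, hn⟩
      exact ⟨n + 1, by rwa [pow_succ, mul_assoc]⟩
    have hle : ∀ K : Ideal S, K ≤ satIdeal K x := fun K a ha => ⟨0, by simpa using ha⟩
    have hLP : ∀ K' P : Ideal S, AssP K P → K' ≤ P → satIdeal K' x ≤ P := by
      rintro K' P hP hK' a ⟨n, hn⟩
      exact (hP.1.mem_or_mem (hK' hn)).resolve_left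
        fun h => hP.notMem hx (hP.1.mem_of_pow_mem n h)
    have hL : ∀ a, a ∈ L₁ → a ∈ L₂ → a ∈ K := by
      rw [hL₁, hL₂]
      rintro a ⟨n, hn⟩ ⟨m, hm⟩
      apply pow_reg hx (n + m)
      rw [hK]
      refine Submodule.mem_inf.2 ⟨?_, ?_⟩
      · have := K₁.mul_mem_left (x ^ m) hn
        convert this using 1; ring
      · have := K₂.mul_mem_left (x ^ n) hm
        convert this using 1; ring
    have hle1 : K₁ ≤ L₁ := hL₁ ▸ hle K₁
    have hle2 : K₂ ≤ L₂ := hL₂ ▸ hle K₂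
    have hK1 : K ≤ L₁ := (hK.le.trans inf_le_left).trans hle1
    have hK2 : K ≤ L₂ := (hK.le.trans inf_le_right).trans hle2
    have hLP1 : L₁ ≤ P₁ := hL₁ ▸ hLP K₁ P₁ hP₁ h₁
    have hLP2 : L₂ ≤ P₂ := hL₂ ▸ hLP K₂ P₂ hP₂ h₂
    have hreg1 : ∀ a, x * a ∈ L₁ → a ∈ L₁ := hL₁ ▸ hreg K₁
    have hreg2 : ∀ a, x * a ∈ L₂ → a ∈ L₂ := hL₂ ▸ hreg K₂
    clear hreg hle hLP hL₁ hL₂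
    have hml : ∀ y ∈ l, y ∈ IsLocalRing.maximalIdeal S := fun y hy => hm y (by simp [hy])
    have hmono : ringKrullDim (S ⧸ (L₁ ⊔ L₂)) ≤ ringKrullDim (S ⧸ (K₁ ⊔ K₂)) :=
      dim_mono (sup_le_sup hle1 hle2)
    suffices hs : (l.length : WithBot ℕ∞) ≤ ringKrullDim (S ⧸ (L₁ ⊔ L₂)) by
      rw [List.length_cons, Nat.cast_add, Nat.cast_one]
      gcongr
      exact hs.trans hmono
    by_cases hJ : ∀ c, x * c ∈ L₁ ⊔ L₂ → c ∈ L₁ ⊔ L₂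
    · obtain ⟨Q₁, hQ₁, hle₁⟩ := hP₁.step (hm x (by simp)) hx
      obtain ⟨Q₂, hQ₂, hle₂⟩ := hP₂.step (hm x (by simp)) hx
      have ih := ihl (K ⊔ Ideal.span {x}) (L₁ ⊔ Ideal.span {x}) (L₂ ⊔ Ideal.span {x})
        Q₁ Q₂ hml hl.2 ?_ hQ₁ hQ₂ ((sup_le_sup_right hLP1 _).trans hle₁)
        ((sup_le_sup_right hLP2 _).trans hle₂)
      · refine ih.trans (le_trans ?_ (dim_succ_le hJ))
        gcongr
        refine dim_mono ?_
        exact sup_le (sup_le_sup le_sup_left le_sup_left)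
          ((le_sup_right (a := L₁)).trans le_sup_left)
      · apply le_antisymm
        · exact le_inf (sup_le_sup_right hK1 _) (sup_le_sup_right hK2 _)
        · rintro f ⟨hf₁, hf₂⟩
          obtain ⟨k₁, hk₁, a, ha⟩ := mem_sup_span_iff.1 hf₁
          obtain ⟨k₂, hk₂, b, hb⟩ := mem_sup_span_iff.1 hf₂
          have hab : a - b ∈ L₁ ⊔ L₂ := by
            apply hJ
            have : x * (a - b) = -k₁ + k₂ := by linear_combination hb - ha
            rw [this]
            exact Submodule.add_mem_sup (neg_mem hk₁) hk₂
          obtain ⟨u, hu, v, hv, huv⟩ := Submodule.mem_sup.1 hab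
          refine mem_sup_span_iff.2 ⟨k₁ + x * u, ?_, b + v, ?_⟩
          · apply hL _ (L₁.add_mem hk₁ (L₁.mul_mem_left _ hu))
            have : k₁ + x * u = k₂ - x * v := by linear_combination hb - ha + x * huv
            rw [this]
            exact L₂.sub_mem hk₂ (L₂.mul_mem_left _ hv)
          · linear_combination ha - x * huv
    · push Not at hJ
      obtain ⟨c, hxc, hc⟩ := hJ
      obtain ⟨k₁, hk₁, k₂, hk₂, hk⟩ := Submodule.mem_sup.1 hxc
      apply length_le_dim' l (K ⊔ Ideal.span {x}) (L₁ ⊔ L₂) hml hl.2 k₂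
      · intro h
        obtain ⟨k, hkK, s, hs⟩ := mem_sup_span_iff.1 h
        apply hc
        have e : c = (c - s) + s := by ring
        rw [e]
        apply Submodule.add_mem_sup
        · apply hreg1
          have : x * (c - s) = k₁ + k := by linear_combination hs - hk
          rw [this]
          exact add_mem hk₁ (hK1 hkK)
        · apply hreg2
          have : x * s = k₂ - k := by linear_combination -hs
          rw [this]
          exact sub_mem hk₂ (hK2 hkK)
      · intro r hr
        obtain ⟨g₁, hg₁, g₂, hg₂, rfl⟩ := Submodule.mem_sup.1 hr
        refine mem_sup_span_iff.2 ⟨g₁ * k₂ - g₂ * k₁, ?_, g₂ * c, ?_⟩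
        · apply K.sub_mem
          · exact hL _ (L₁.mul_mem_right _ hg₁) (L₂.mul_mem_left _ hk₂)
          · exact hL _ (L₁.mul_mem_left _ hk₁) (L₂.mul_mem_right _ hg₂)
        · linear_combination g₂ * hk

/-- short exact sequence lemma -/
theorem WReg.of_colon {R : Type*} [CommRing R] :
    ∀ (l : List R) (K K' : Ideal R) (f : R), (∀ b, f * b ∈ K ↔ b ∈ K') → WReg K' l →
      WReg (K ⊔ Ideal.span {f}) l → WReg K l
  | [], _, _, _, _, _, _ => trivial
  | x :: l, K, K', f, hf, h₁, h₂ => by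
    refine ⟨?_, of_colon l (K ⊔ Ideal.span {x}) (K' ⊔ Ideal.span {x}) f ?_ h₁.2 ?_⟩
    · intro a ha
      obtain ⟨k, hk, b, rfl⟩ := mem_sup_span_iff.1 (h₂.1 a (Ideal.mem_sup_left ha))
      refine K.add_mem hk ((hf _).2 (h₁.1 b ((hf _).1 ?_)))
      have := K.sub_mem ha (K.mul_mem_left x hk)
      convert this using 1; ring
    · intro b
      constructor
      · intro h
        obtain ⟨k, hk, c, hc⟩ := mem_sup_span_iff.1 h
        have : c ∈ K ⊔ Ideal.span {f} := by
          apply h₂.1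
          exact mem_sup_span_iff.2 ⟨-k, K.neg_mem hk, b, by linear_combination -hc⟩
        obtain ⟨k', hk', e, rfl⟩ := mem_sup_span_iff.1 this
        refine mem_sup_span_iff.2 ⟨b - x * e, (hf _).1 ?_, e, by ring⟩
        have : f * (b - x * e) = k + x * k' := by linear_combination hc
        rw [this]
        exact K.add_mem hk (K.mul_mem_left _ hk')
      · intro h
        obtain ⟨k, hk, c, rfl⟩ := mem_sup_span_iff.1 h
        exact mem_sup_span_iff.2 ⟨f * k, (hf _).2 hk, f * c, by ring⟩
    · have := h₂.2
      rwa [sup_right_comm] at this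

/-- Localization -/
theorem WReg.localize {R : Type*} [CommRing R] (M : Submonoid R) (S : Type*) [CommRing S]
    [Algebra R S] [IsLocalization M S] :
    ∀ (l : List R) (K : Ideal R), WReg K l →
      WReg (K.map (algebraMap R S)) (l.map (algebraMap R S))
  | [], _, _ => trivial
  | x :: l, K, h => by
    refine ⟨?_, ?_⟩
    · intro a ha
      obtain ⟨b, s, rfl⟩ := IsLocalization.exists_mk'_eq M a
      rw [← IsLocalization.mk'_one (M := M) S x, ← IsLocalization.mk'_mul,
        IsLocalization.mk'_mem_map_algebraMap_iff] at ha
      obtain ⟨t, ht, hts⟩ := ha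
      rw [IsLocalization.mk'_mem_map_algebraMap_iff]
      refine ⟨t, ht, h.1 _ ?_⟩
      convert hts using 1; ring
    · have := localize M S l _ h.2
      rwa [Ideal.map_sup, Ideal.map_span, Set.image_singleton] at this

theorem AssP.localize {R : Type*} [CommRing R] (m : Ideal R) [m.IsPrime] {K P : Ideal R}
    (h : AssP K P) (hm : P ≤ m) :
    AssP (K.map (algebraMap R (Localization.AtPrime m)))
      (P.map (algebraMap R (Localization.AtPrime m))) := by
  obtain ⟨hp, z, hz⟩ := h
  refine ⟨IsLocalization.isPrime_of_isPrime_disjoint m.primeCompl _ P hp ?_,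
    algebraMap _ _ z, fun r => ?_⟩
  · rw [Set.disjoint_left]
    exact fun a ha ha' => ha (hm ha')
  · obtain ⟨b, s, rfl⟩ := IsLocalization.exists_mk'_eq m.primeCompl r
    rw [← IsLocalization.mk'_one (M := m.primeCompl) (Localization.AtPrime m) z,
      ← IsLocalization.mk'_mul,
      IsLocalization.mk'_mem_map_algebraMap_iff, IsLocalization.mk'_mem_map_algebraMap_iff]
    simp only [hz, mul_assoc]

theorem dim_localize_le {R : Type*} [CommRing R] (M : Submonoid R) (S : Type*) [CommRing S]
    [Algebra R S] [IsLocalization M S] (J : Ideal R) :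
    ringKrullDim (S ⧸ J.map (algebraMap R S)) ≤ ringKrullDim (R ⧸ J) := by
  rw [ringKrullDim_quotient, ringKrullDim_quotient]
  let g : PrimeSpectrum.zeroLocus (R := S) (J.map (algebraMap R S)) →
      PrimeSpectrum.zeroLocus (R := R) J := fun p =>
    ⟨PrimeSpectrum.comap (algebraMap R S) p.1, by
      have := p.2
      rw [PrimeSpectrum.mem_zeroLocus, SetLike.coe_subset_coe, Ideal.map_le_iff_le_comap] at this
      exact this⟩
  refine Order.krullDim_le_of_strictMono g (Monotone.strictMono_of_injective ?_ ?_)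
  · intro p q hpq
    exact Ideal.comap_mono hpq
  · intro p q hpq
    apply Subtype.ext
    exact PrimeSpectrum.localization_comap_injective S M (congrArg Subtype.val hpq)

open scoped Pointwise in
theorem WReg.iff_isWeaklyRegular {R : Type*} [CommRing R] :
    ∀ (l : List R) (K : Ideal R), WReg K l ↔ RingTheory.Sequence.IsWeaklyRegular (R ⧸ K) l
  | [], K => by simp [WReg]
  | x :: l, K => by
    rw [RingTheory.Sequence.isWeaklyRegular_cons_iff]
    have e : QuotSMulTop x (R ⧸ K) ≃ₗ[R] (R ⧸ (K ⊔ Ideal.span {x})) := by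
      have h : x • (⊤ : Submodule R (R ⧸ K)) = Submodule.map K.mkQ (Ideal.span {x}) := by
        ext y
        obtain ⟨y, rfl⟩ := K.mkQ_surjective y
        rw [Submodule.mem_smul_pointwise_iff_exists]
        constructor
        · rintro ⟨b, -, hb⟩
          obtain ⟨b, rfl⟩ := K.mkQ_surjective b
          exact ⟨x * b, Ideal.mul_mem_right _ _ (Ideal.mem_span_singleton_self x), hb⟩
        · rintro ⟨c, hc, hcy⟩
          obtain ⟨b, rfl⟩ := Ideal.mem_span_singleton'.1 hc
          refine ⟨K.mkQ b, trivial, ?_⟩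
          rw [← hcy, mul_comm]
          rfl
      exact (Submodule.quotEquivOfEq _ _ h).trans
        (Submodule.quotientQuotientEquivQuotientSup K (Ideal.span {x}))
    rw [e.isWeaklyRegular_congr, ← iff_isWeaklyRegular l]
    refine and_congr ?_ Iff.rfl
    rw [isSMulRegular_iff_right_eq_zero_of_smul]
    constructor
    · intro h a ha
      obtain ⟨a, rfl⟩ := Ideal.Quotient.mk_surjective a
      rw [Ideal.Quotient.eq_zero_iff_mem]
      apply h
      rw [← Ideal.Quotient.eq_zero_iff_mem, map_mul]
      exact ha
    · intro h a ha
      rw [← Ideal.Quotient.eq_zero_iff_mem] at ha ⊢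
      exact h _ (by rw [map_mul] at ha; exact ha)
end CommAlg

section Poly

variable {k : Type*} [Field k] {m : ℕ}

/-- The ideal generated by a set of variables. -/
noncomputable def varIdeal (k : Type*) [Field k] {m : ℕ} (W : Set (Fin m)) :
    Ideal (MvPolynomial (Fin m) k) :=
  Ideal.span (MvPolynomial.X '' W)

theorem X_mem_varIdeal {W : Set (Fin m)} {i : Fin m} :
    (X i : MvPolynomial (Fin m) k) ∈ varIdeal k W ↔ i ∈ W := by
  classical
  rw [varIdeal, mem_ideal_span_X_image]
  simp only [support_X, Finset.mem_singleton, forall_eq]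
  constructor
  · rintro ⟨j, hj, h⟩
    have : i = j := by
      by_contra hne
      exact h (Finsupp.single_eq_of_ne' hne)
    rwa [this]
  · intro h
    exact ⟨i, h, by simp⟩

theorem varIdeal_le {W : Set (Fin m)} {J : Ideal (MvPolynomial (Fin m) k)} :
    varIdeal k W ≤ J ↔ ∀ i ∈ W, X i ∈ J := by
  rw [varIdeal, Ideal.span_le]
  simp [Set.subset_def]

open Classical in
/-- evaluation killing the variables of `W` -/
noncomputable def killVars (k : Type*) [Field k] {m : ℕ} (W : Set (Fin m)) :
    MvPolynomial (Fin m) k →ₐ[k] MvPolynomial (↥Wᶜ) k :=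
  aeval (fun i => if h : i ∈ Wᶜ then X ⟨i, h⟩ else 0)

theorem killVars_surj (W : Set (Fin m)) : Function.Surjective (killVars k W) := by
  intro f
  refine ⟨rename Subtype.val f, ?_⟩
  have : (killVars k W).comp (rename Subtype.val) = AlgHom.id k _ := by
    apply MvPolynomial.algHom_ext
    intro i
    have := i.2
    simp only [Set.mem_compl_iff] at this
    simp [killVars, this]
  exact DFunLike.congr_fun this f

theorem ker_killVars (W : Set (Fin m)) : RingHom.ker (killVars k W) = varIdeal k W := by
  apply le_antisymm
  · intro f hf
    rw [RingHom.mem_ker] at hf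
    have : ((Ideal.Quotient.mkₐ k (varIdeal k W)).comp (rename Subtype.val)).comp (killVars k W)
        = Ideal.Quotient.mkₐ k (varIdeal k W) := by
      apply MvPolynomial.algHom_ext
      intro i
      by_cases hi : i ∈ W
      · have h1 : killVars k W (X i) = 0 := by simp [killVars, hi]
        simp only [AlgHom.comp_apply, h1, map_zero]
        exact (Ideal.Quotient.eq_zero_iff_mem.2 (X_mem_varIdeal.2 hi)).symm
      · simp [killVars, hi]
    have h := DFunLike.congr_fun this f
    simp only [AlgHom.comp_apply, hf, map_zero] at h
    exact Ideal.Quotient.eq_zero_iff_mem.1 h.symm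
  · rw [varIdeal_le]
    intro i hi
    simp [RingHom.mem_ker, killVars, hi]

theorem varIdeal_isPrime (W : Set (Fin m)) : (varIdeal k W).IsPrime := by
  rw [← ker_killVars]
  exact RingHom.ker_isPrime _

theorem dim_varIdeal (C : Finset (Fin m)) :
    ringKrullDim (MvPolynomial (Fin m) k ⧸ varIdeal k (C : Set (Fin m))) = ((m - C.card : ℕ) : WithBot ℕ∞) := by
  have e : ringKrullDim (MvPolynomial (Fin m) k ⧸ RingHom.ker (killVars k (C : Set (Fin m)))) = _ :=
    ringKrullDim_eq_of_ringEquiv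
    (RingHom.quotientKerEquivOfSurjective (killVars_surj (k := k) (C : Set (Fin m))))
  rw [← ker_killVars, e,
    MvPolynomial.ringKrullDim_of_isNoetherianRing, ringKrullDim_eq_zero_of_field, zero_add]
  congr 1
  classical
  have : ((C : Set (Fin m))ᶜ : Set (Fin m)) = ((Cᶜ : Finset (Fin m)) : Set (Fin m)) := by simp
  rw [this, Nat.card_eq_card_toFinset]
  simp [Finset.card_compl]

theorem mxIdeal_eq : mxIdeal k m = varIdeal k Set.univ := by
  rw [mxIdeal, varIdeal, Set.image_univ]

theorem varIdeal_mono {W W' : Set (Fin m)} (h : W ⊆ W') : varIdeal k W ≤ varIdeal k W' :=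
  Ideal.span_mono (Set.image_mono h)

theorem varIdeal_le_mx (W : Set (Fin m)) : varIdeal k W ≤ mxIdeal k m := by
  rw [mxIdeal_eq]
  exact varIdeal_mono (Set.subset_univ _)

theorem mx_isPrime : (mxIdeal k m).IsPrime := by
  rw [mxIdeal_eq]
  exact varIdeal_isPrime _

theorem mem_edge_sup_var (G : SimpleGraph (Fin m)) (Z : Set (Fin m))
    (f : MvPolynomial (Fin m) k) :
    f ∈ edgeIdealG k G ⊔ varIdeal k Z ↔
      ∀ s ∈ f.support, (∃ i j, G.Adj i j ∧ s i ≠ 0 ∧ s j ≠ 0) ∨ ∃ z ∈ Z, s z ≠ 0 := by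
  classical
  have h : edgeIdealG k G ⊔ varIdeal k Z = Ideal.span ((fun s => monomial s (1 : k)) ''
      ({s | ∃ i j, G.Adj i j ∧ s = Finsupp.single i 1 + Finsupp.single j 1} ∪
        {s | ∃ z ∈ Z, s = Finsupp.single z 1})) := by
    rw [edgeIdealG, varIdeal, ← Ideal.span_union, Set.image_union]
    congr 2
    · ext p
      constructor
      · rintro ⟨i, j, h, rfl⟩
        exact ⟨_, ⟨i, j, h, rfl⟩, by simp [X, monomial_mul]⟩
      · rintro ⟨_, ⟨i, j, h, rfl⟩, rfl⟩
        exact ⟨i, j, h, by simp [X, monomial_mul]⟩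
    · ext p
      constructor
      · rintro ⟨i, h, rfl⟩
        exact ⟨_, ⟨i, h, rfl⟩, rfl⟩
      · rintro ⟨_, ⟨i, h, rfl⟩, rfl⟩
        exact ⟨i, h, rfl⟩
  rw [h, mem_ideal_span_monomial_image]
  refine forall₂_congr fun s _ => ?_
  have key : ∀ i j, i ≠ j → (Finsupp.single i 1 + Finsupp.single j 1 ≤ s ↔ s i ≠ 0 ∧ s j ≠ 0) := by
    intro i j hij
    constructor
    · intro h
      have h1 := h i
      have h2 := h j
      simp [Finsupp.single_apply, hij, hij.symm] at h1 h2
      omega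
    · rintro ⟨h1, h2⟩ a
      simp only [Finsupp.add_apply, Finsupp.single_apply]
      split_ifs with ha hb hb
      · subst ha; exact absurd hb.symm hij
      · subst ha; omega
      · subst hb; omega
      · omega
  constructor
  · rintro ⟨_, ⟨i, j, h, rfl⟩ | ⟨z, hz, rfl⟩, hle⟩
    · exact Or.inl ⟨i, j, h, (key i j h.ne).1 hle⟩
    · right
      refine ⟨z, hz, ?_⟩
      have := hle z
      simp at this
      omega
  · rintro (⟨i, j, h, hs⟩ | ⟨z, hz, hs⟩)
    · exact ⟨_, Or.inl ⟨i, j, h, rfl⟩, (key i j h.ne).2 hs⟩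
    · refine ⟨_, Or.inr ⟨z, hz, rfl⟩, ?_⟩
      rw [Finsupp.single_le_iff]
      omega

theorem varIdeal_empty : varIdeal k (∅ : Set (Fin m)) = ⊥ := by
  simp [varIdeal]

theorem varIdeal_union (A B : Set (Fin m)) :
    varIdeal k (A ∪ B) = varIdeal k A ⊔ varIdeal k B := by
  rw [varIdeal, Set.image_union, Ideal.span_union]; rfl

theorem varIdeal_singleton (v : Fin m) :
    varIdeal k ({v} : Set (Fin m)) = Ideal.span {X v} := by
  rw [varIdeal, Set.image_singleton]

theorem mem_edge (G : SimpleGraph (Fin m)) (f : MvPolynomial (Fin m) k) :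
    f ∈ edgeIdealG k G ↔ ∀ s ∈ f.support, ∃ i j, G.Adj i j ∧ s i ≠ 0 ∧ s j ≠ 0 := by
  have := mem_edge_sup_var G ∅ f
  rw [varIdeal_empty, sup_bot_eq] at this
  simpa using this

theorem colon_var (G : SimpleGraph (Fin m)) (Z : Set (Fin m)) (v : Fin m) (hv : v ∉ Z)
    (b : MvPolynomial (Fin m) k) :
    X v * b ∈ edgeIdealG k G ⊔ varIdeal k Z ↔
      b ∈ edgeIdealG k G ⊔ varIdeal k (Z ∪ G.neighborSet v) := by
  classical
  rw [mem_edge_sup_var, mem_edge_sup_var, support_X_mul]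
  simp only [Finset.mem_map, forall_exists_index, and_imp, forall_apply_eq_imp_iff₂]
  refine forall₂_congr fun s _ => ?_
  have hs : ∀ i, (addLeftEmbedding (Finsupp.single v 1) s) i ≠ 0 ↔ v = i ∨ s i ≠ 0 := by
    intro i
    simp only [addLeftEmbedding_apply, Finsupp.add_apply, Finsupp.single_apply]
    split_ifs with h <;> simp [h]
  simp only [hs]
  constructor
  · rintro (⟨i, j, h, rfl | hi, rfl | hj⟩ | ⟨z, hz, rfl | hs⟩)
    · exact absurd h (G.irrefl)
    · exact Or.inr ⟨j, Or.inr h, hj⟩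
    · exact Or.inr ⟨i, Or.inr h.symm, hi⟩
    · exact Or.inl ⟨i, j, h, hi, hj⟩
    · exact absurd hz hv
    · exact Or.inr ⟨z, Or.inl hz, hs⟩
  · rintro (⟨i, j, h, hi, hj⟩ | ⟨z, hz | hz, hs⟩)
    · exact Or.inl ⟨i, j, h, Or.inr hi, Or.inr hj⟩
    · exact Or.inr ⟨z, hz, Or.inr hs⟩
    · exact Or.inl ⟨v, z, hz, Or.inl rfl, Or.inr hs⟩

theorem twin_inf (G : SimpleGraph (Fin m)) (v w : Fin m)
    (h : G.neighborSet v = G.neighborSet w) :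
    edgeIdealG k G = (edgeIdealG k G ⊔ varIdeal k {v, w}) ⊓
      (edgeIdealG k G ⊔ varIdeal k (G.neighborSet v)) := by
  apply le_antisymm (le_inf le_sup_left le_sup_left)
  rintro f ⟨h1, h2⟩
  have h1 := (mem_edge_sup_var G _ f).1 h1
  have h2 := (mem_edge_sup_var G _ f).1 h2
  rw [mem_edge]
  intro s hs
  rcases h1 s hs with h1 | ⟨z, hz, hsz⟩
  · exact h1
  · rcases h2 s hs with h2 | ⟨u, hu, hsu⟩
    · exact h2
    · rcases hz with rfl | rfl
      · exact ⟨z, u, hu, hsz, hsu⟩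
      · exact ⟨z, u, by rw [h] at hu; exact hu, hsz, hsu⟩

theorem edge_le_var {G : SimpleGraph (Fin m)} {C : Finset (Fin m)} (hC : IsVertexCover G C) :
    edgeIdealG k G ≤ varIdeal k (C : Set (Fin m)) := by
  rw [edgeIdealG, Ideal.span_le]
  rintro p ⟨i, j, h, rfl⟩
  rcases hC i j h with hi | hj
  · exact Ideal.mul_mem_right _ _ (X_mem_varIdeal.2 hi)
  · exact Ideal.mul_mem_left _ _ (X_mem_varIdeal.2 hj)

theorem assP_cover {G : SimpleGraph (Fin m)} {C : Finset (Fin m)}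
    (hC : IsMinimalVertexCover G C) : AssP (edgeIdealG k G) (varIdeal k (C : Set (Fin m))) := by
  classical
  have hp := varIdeal_isPrime (k := k) (C : Set (Fin m))
  refine ⟨hp, ∏ i ∈ Cᶜ, X i, fun r => ⟨fun hr => ?_, fun hr => ?_⟩⟩
  · have : varIdeal k (C : Set (Fin m)) ≤
        Submodule.comap (LinearMap.mulRight (MvPolynomial (Fin m) k)
          (∏ i ∈ Cᶜ, (X i : MvPolynomial (Fin m) k))) (edgeIdealG k G) := by
      rw [varIdeal, Ideal.span, Submodule.span_le]
      rintro _ ⟨v, hv, rfl⟩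
      have : ∃ w, w ∉ C ∧ G.Adj v w := by
        by_contra! hcon
        have := hC.2 (C.erase v) (Finset.erase_subset _ _) ?_
        · have hv' : v ∈ C := hv
          rw [← this] at hv'
          simp at hv'
        · intro a b hab
          by_cases ha : a = v
          · right
            subst ha
            refine Finset.mem_erase.2 ⟨hab.ne', ?_⟩
            by_contra hb
            exact hcon b hb hab
          · by_cases hb : b = v
            · left
              subst hb
              refine Finset.mem_erase.2 ⟨ha, ?_⟩
              by_contra ha
              exact hcon a ha hab.symm
            · simpa [ha, hb] using hC.1 a b hab
      obtain ⟨w, hw, hvw⟩ := this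
      change X v * ∏ i ∈ Cᶜ, (X i : MvPolynomial (Fin m) k) ∈ edgeIdealG k G
      rw [← Finset.mul_prod_erase Cᶜ _ (Finset.mem_compl.2 hw), ← mul_assoc]
      exact Ideal.mul_mem_right _ _ (Ideal.subset_span ⟨v, w, hvw, rfl⟩)
    exact this hr
  · refine (hp.mem_or_mem (edge_le_var hC.1 hr)).resolve_right ?_
    intro h
    obtain ⟨i, hi, h⟩ := (hp.prod_mem_iff).1 h
    rw [X_mem_varIdeal] at h
    simp at hi
    exact hi h

theorem dim_le_of_primes {J : Ideal (MvPolynomial (Fin m) k)} {c : ℕ}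
    (h : ∀ Q : Ideal (MvPolynomial (Fin m) k), Q.IsPrime → J ≤ Q →
      ∃ C : Finset (Fin m), c ≤ C.card ∧ ∀ i ∈ C, X i ∈ Q) :
    ringKrullDim (MvPolynomial (Fin m) k ⧸ J) ≤ ((m - c : ℕ) : WithBot ℕ∞) := by
  rw [ringKrullDim_quotient, Order.krullDim]
  apply iSup_le
  intro l
  obtain ⟨C, hc, hC⟩ := h l.head.1.asIdeal l.head.1.isPrime l.head.2
  have hd := dim_varIdeal (k := k) C
  rw [ringKrullDim_quotient] at hd
  have hz : ∀ i, (l i).1 ∈ PrimeSpectrum.zeroLocus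
      (varIdeal k (C : Set (Fin m)) : Set (MvPolynomial (Fin m) k)) := by
    intro i
    rw [PrimeSpectrum.mem_zeroLocus, SetLike.coe_subset_coe, varIdeal_le]
    intro a ha
    exact (LTSeries.head_le l i) (hC a ha)
  let l' : LTSeries (PrimeSpectrum.zeroLocus
      (varIdeal k (C : Set (Fin m)) : Set (MvPolynomial (Fin m) k))) :=
    { length := l.length
      toFun := fun i => ⟨(l i).1, hz i⟩
      step := fun i => l.step i }
  have := Order.LTSeries.length_le_krullDim l'
  rw [hd] at this
  refine le_trans this ?_
  exact_mod_cast (by omega : m - C.card ≤ m - c)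

open Classical in
theorem cover_of_prime {G : SimpleGraph (Fin m)} {Q : Ideal (MvPolynomial (Fin m) k)}
    (hQ : Q.IsPrime) (h : edgeIdealG k G ≤ Q) :
    IsVertexCover G (Finset.univ.filter fun i => X i ∈ Q) := by
  intro a b hab
  simp only [Finset.mem_filter, Finset.mem_univ, true_and]
  exact hQ.mem_or_mem (h (Ideal.subset_span ⟨a, b, hab, rfl⟩))

theorem exists_minimal_cover {G : SimpleGraph (Fin m)} {C : Finset (Fin m)}
    (h : IsVertexCover G C) : ∃ C' ⊆ C, IsMinimalVertexCover G C' := by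
  obtain ⟨C', hle, hmin⟩ := exists_minimal_le_of_wellFoundedLT (IsVertexCover G) C h
  exact ⟨C', hle, hmin.1, fun D hD hDc => le_antisymm hD (hmin.2 hDc hD)⟩

/-- base case of regularity -/
theorem wreg_base (st : Fin m → Fin m) :
    ∀ (l : List (Fin m)) (W : Set (Fin m)), 
      l.Pairwise (fun u v => u ≠ v ∧ u ≠ st v ∧ st u ≠ v ∧ st u ≠ st v) →
      (∀ v ∈ l, (v ∈ W ∧ st v ∉ W) ∨ (v ∉ W ∧ st v ∈ W)) →
      WReg (varIdeal k W) (l.map fun v => (X v - X (st v) : MvPolynomial (Fin m) k))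
  | [], _, _, _ => trivial
  | v :: l, W, hp, hl => by
    rw [List.pairwise_cons] at hp
    have hpr := varIdeal_isPrime (k := k) W
    have hv := hl v (by simp)
    refine ⟨fun a ha => (hpr.mem_or_mem ha).resolve_left ?_, ?_⟩
    · intro h
      rcases hv with ⟨h1, h2⟩ | ⟨h1, h2⟩
      · apply h2
        rw [← X_mem_varIdeal (k := k)] at h1 ⊢
        simpa using sub_mem h1 h
      · apply h1
        rw [← X_mem_varIdeal (k := k)] at h2 ⊢
        simpa using add_mem h h2
    · have e : varIdeal k W ⊔ Ideal.span {(X v - X (st v) : MvPolynomial (Fin m) k)}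
          = varIdeal k (W ∪ {v, st v}) := by
        apply le_antisymm
        · refine sup_le (varIdeal_mono Set.subset_union_left) ?_
          rw [Ideal.span_singleton_le_iff_mem]
          exact sub_mem (X_mem_varIdeal.2 (by simp)) (X_mem_varIdeal.2 (by simp))
        · have hm : (X v - X (st v) : MvPolynomial (Fin m) k) ∈
              varIdeal k W ⊔ Ideal.span {(X v - X (st v) : MvPolynomial (Fin m) k)} :=
            Ideal.mem_sup_right (Ideal.mem_span_singleton_self _)
          have hW : ∀ i ∈ W, (X i : MvPolynomial (Fin m) k) ∈
              varIdeal k W ⊔ Ideal.span {(X v - X (st v) : MvPolynomial (Fin m) k)} :=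
            fun i hi => Ideal.mem_sup_left (X_mem_varIdeal.2 hi)
          rw [varIdeal_le]
          rintro i (hi | rfl | rfl)
          · exact hW i hi
          · rcases hv with ⟨h1, h2⟩ | ⟨h1, h2⟩
            · exact hW _ h1
            · simpa using add_mem hm (hW _ h2)
          · rcases hv with ⟨h1, h2⟩ | ⟨h1, h2⟩
            · simpa using sub_mem (hW _ h1) hm
            · exact hW _ h2
      rw [e]
      refine wreg_base st l _ hp.2 ?_
      intro u hu
      obtain ⟨a, b, c, d⟩ := hp.1 u hu
      have := hl u (by simp [hu])
      simp only [Set.mem_union, Set.mem_insert_iff, Set.mem_singleton_iff]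
      grind

end Poly

section Comb

variable {m : ℕ}

/-- independent sets -/
def Indep (G : SimpleGraph (Fin m)) (S : Finset (Fin m)) : Prop :=
  ∀ a ∈ S, ∀ b ∈ S, ¬ G.Adj a b

theorem Indep.extend {G : SimpleGraph (Fin m)} {n : ℕ} (hm : m = 2 * n)
    (hG : ∀ C : Finset (Fin m), IsMinimalVertexCover G C → C.card = n)
    {S : Finset (Fin m)} (hS : Indep G S) : ∃ M, S ⊆ M ∧ Indep G M ∧ M.card = n := by
  have hc : IsVertexCover G Sᶜ := by
    intro a b hab
    by_contra! h
    simp only [Finset.mem_compl, not_not] at h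
    exact hS a h.1 b h.2 hab
  obtain ⟨C, hC, hmin⟩ := exists_minimal_cover hc
  refine ⟨Cᶜ, ?_, ?_, ?_⟩
  · rw [← Finset.compl_subset_compl, compl_compl]
    exact hC
  · intro a ha b hb hab
    rw [Finset.mem_compl] at ha hb
    exact (hmin.1 a b hab).elim ha hb
  · rw [Finset.card_compl, hG C hmin, Fintype.card_fin]
    omega

open Classical in
theorem hall_cond {G : SimpleGraph (Fin m)} {n : ℕ}
    (hniso : ∀ v, ∃ w, G.Adj v w)
    (hext : ∀ S : Finset (Fin m), Indep G S → ∃ M, S ⊆ M ∧ Indep G M ∧ M.card = n) :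
    ∀ (N : ℕ) (S : Finset (Fin m)), S.card = N → Indep G S →
      S.card ≤ (S.biUnion fun v => G.neighborFinset v).card := by
  intro N
  induction N using Nat.strong_induction_on with
  | _ N ih =>
  intro S hSN hS
  rcases S.eq_empty_or_nonempty with rfl | ⟨s, hs⟩
  · simp
  set NS := S.biUnion fun v => G.neighborFinset v with hNS
  have memNS : ∀ x, x ∈ NS ↔ ∃ v ∈ S, G.Adj v x := by simp [hNS]
  have hle : ∀ S, Indep G S → S.card ≤ n := by
    intro S hS
    obtain ⟨M, h1, _, h3⟩ := hext S hS
    rw [← h3]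
    exact Finset.card_le_card h1
  obtain ⟨A, -, hA⟩ := exists_maximal_ge_of_wellFoundedGT
    (fun A : Finset (Fin m) => A ⊆ NS ∧ Indep G A) ∅ ⟨by simp, by simp [Indep]⟩
  obtain ⟨⟨hANS, hAi⟩, hAmax⟩ := hA
  have hdom : ∀ x ∈ NS, x ∉ A → ∃ a ∈ A, G.Adj a x := by
    intro x hx hxA
    by_contra! hcon
    have := @hAmax (insert x A) ⟨Finset.insert_subset hx hANS, ?_⟩ (Finset.subset_insert _ _)
    · exact hxA (this (Finset.mem_insert_self _ _))
    · intro a ha b hb hab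
      rw [Finset.mem_insert] at ha hb
      rcases ha with rfl | ha <;> rcases hb with rfl | hb
      · exact G.irrefl hab
      · exact hcon b hb hab.symm
      · exact hcon a ha hab
      · exact hAi a ha b hb hab
  have hAne : ∃ a, a ∈ A := by
    obtain ⟨w, hw⟩ := hniso s
    by_cases hwA : w ∈ A
    · exact ⟨w, hwA⟩
    · obtain ⟨a, ha, _⟩ := hdom w ((memNS w).2 ⟨s, hs, hw⟩) hwA
      exact ⟨a, ha⟩
  set S' := S.filter fun x => ∀ a ∈ A, ¬ G.Adj a x with hS'
  have hS'S : S' ⊆ S := Finset.filter_subset _ _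
  have hdisj : ∀ x ∈ A, x ∉ S := by
    intro x hx hxS
    obtain ⟨v, hv, hvx⟩ := (memNS x).1 (hANS hx)
    exact hS v hv x hxS hvx
  have hBi : Indep G (A ∪ S') := by
    intro a ha b hb hab
    rw [Finset.mem_union] at ha hb
    rcases ha with ha | ha <;> rcases hb with hb | hb
    · exact hAi a ha b hb hab
    · exact (Finset.mem_filter.1 hb).2 a ha hab
    · exact (Finset.mem_filter.1 ha).2 b hb hab.symm
    · exact hS a (hS'S ha) b (hS'S hb) hab
  have hBcard : (A ∪ S').card = A.card + S'.card :=
    Finset.card_union_of_disjoint (Finset.disjoint_left.2 fun x hx hx' => hdisj x hx (hS'S hx'))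
  have hcard1 : S.card ≤ A.card + S'.card := by
    obtain ⟨M, hBM, hMi, hMn⟩ := hext _ hBi
    have hMS : ∀ x ∈ M \ (A ∪ S'), x ∉ S ∧ x ∉ NS := by
      intro x hx
      simp only [Finset.mem_sdiff, Finset.mem_union, not_or] at hx
      refine ⟨fun hxS => ?_, fun hxN => ?_⟩
      · apply hx.2.2
        refine Finset.mem_filter.2 ⟨hxS, fun a ha hax => ?_⟩
        exact hMi a (hBM (Finset.mem_union_left _ ha)) x hx.1 hax
      · obtain ⟨a, ha, hax⟩ := hdom x hxN hx.2.1
        exact hMi a (hBM (Finset.mem_union_left _ ha)) x hx.1 hax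
    have hI : Indep G ((M \ (A ∪ S')) ∪ S) := by
      intro a ha b hb hab
      rw [Finset.mem_union] at ha hb
      rcases ha with ha | ha <;> rcases hb with hb | hb
      · exact hMi a (Finset.mem_sdiff.1 ha).1 b (Finset.mem_sdiff.1 hb).1 hab
      · exact (hMS a ha).2 ((memNS a).2 ⟨b, hb, hab.symm⟩)
      · exact (hMS b hb).2 ((memNS b).2 ⟨a, ha, hab⟩)
      · exact hS a ha b hb hab
    have h1 := hle _ hI
    rw [Finset.card_union_of_disjoint (Finset.disjoint_left.2 fun x hx => (hMS x hx).1),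
      Finset.card_sdiff_of_subset hBM, hBcard] at h1
    have h2 := Finset.card_le_card hBM
    omega
  have hlt : S'.card < N := by
    rw [← hSN]
    apply Finset.card_lt_card
    refine ⟨hS'S, fun h => ?_⟩
    obtain ⟨a, ha⟩ := hAne
    obtain ⟨v, hv, hva⟩ := (memNS a).1 (hANS ha)
    exact (Finset.mem_filter.1 (h hv)).2 a ha hva.symm
  have hS'i : Indep G S' := fun a ha b hb => hS a (hS'S ha) b (hS'S hb)
  have h3 := ih _ hlt S' rfl hS'i
  have h4 : (S'.biUnion fun v => G.neighborFinset v) ⊆ NS \ A := by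
    intro x hx
    simp only [Finset.mem_biUnion, SimpleGraph.mem_neighborFinset] at hx
    obtain ⟨v, hv, hvx⟩ := hx
    refine Finset.mem_sdiff.2 ⟨(memNS x).2 ⟨v, hS'S hv, hvx⟩, fun hxA => ?_⟩
    exact (Finset.mem_filter.1 hv).2 x hxA hvx.symm
  have h5 := Finset.card_le_card h4
  rw [Finset.card_sdiff_of_subset hANS] at h5
  have h6 := Finset.card_le_card hANS
  omega

theorem exists_star {G : SimpleGraph (Fin m)} {n : ℕ} (hm : m = 2 * n)
    (hniso : ∀ v, ∃ w, G.Adj v w)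
    (hG : ∀ C : Finset (Fin m), IsMinimalVertexCover G C → C.card = n) :
    ∃ (st : Fin m → Fin m) (Y : Finset (Fin m)), Y.card = n ∧ (∀ v, st (st v) = v) ∧
      (∀ v, G.Adj v (st v)) ∧ (∀ v, v ∈ Y ↔ st v ∉ Y) := by
  classical
  have hext : ∀ S : Finset (Fin m), Indep G S → ∃ M, S ⊆ M ∧ Indep G M ∧ M.card = n :=
    fun S hS => hS.extend hm hG
  obtain ⟨Y, -, hYi, hYn⟩ := hext ∅ (by simp [Indep])
  obtain ⟨f, hf, hfN⟩ := (Finset.all_card_le_biUnion_card_iff_exists_injective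
    (fun y : Y => G.neighborFinset y.1)).1 (by
      intro s
      have := hall_cond hniso hext _ (s.map (Function.Embedding.subtype _)) rfl (by
        intro a ha b hb
        simp only [Finset.mem_map, Function.Embedding.coe_subtype] at ha hb
        obtain ⟨a, _, rfl⟩ := ha
        obtain ⟨b, _, rfl⟩ := hb
        exact hYi _ a.2 _ b.2)
      rw [Finset.card_map] at this
      convert this using 2
      ext x
      simp)
  simp only [SimpleGraph.mem_neighborFinset] at hfN
  have hfY : ∀ y : Y, f y ∉ Y := fun y h => hYi _ y.2 _ h (hfN y)
  let g : Y → (Yᶜ : Finset (Fin m)) := fun y => ⟨f y, Finset.mem_compl.2 (hfY y)⟩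
  have hg : Function.Bijective g := by
    rw [Fintype.bijective_iff_injective_and_card]
    refine ⟨fun a b h => hf (congrArg Subtype.val h), ?_⟩
    simp only [Fintype.card_coe, Finset.card_compl, Fintype.card_fin]
    omega
  let e := Equiv.ofBijective g hg
  have he : ∀ y, G.Adj y.1 (e y).1 := fun y => hfN y
  let st : Fin m → Fin m := fun v =>
    if h : v ∈ Y then (e ⟨v, h⟩).1 else (e.symm ⟨v, Finset.mem_compl.2 h⟩).1
  have st1 : ∀ v (h : v ∈ Y), st v = (e ⟨v, h⟩).1 := fun v h => dif_pos h
  have st2 : ∀ v (h : v ∉ Y), st v = (e.symm ⟨v, Finset.mem_compl.2 h⟩).1 := fun v h => dif_neg h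
  have m1 : ∀ v, v ∈ Y → st v ∉ Y := by
    intro v h
    rw [st1 v h]
    exact Finset.mem_compl.1 (e _).2
  have m2 : ∀ v, v ∉ Y → st v ∈ Y := by
    intro v h
    rw [st2 v h]
    exact (e.symm _).2
  refine ⟨st, Y, hYn, ?_, ?_, ?_⟩
  · intro v
    by_cases h : v ∈ Y
    · rw [st2 _ (m1 v h)]
      simp [st1 v h]
    · rw [st1 _ (m2 v h)]
      simp [st2 v h]
  · intro v
    by_cases h : v ∈ Y
    · rw [st1 v h]; exact he ⟨v, h⟩
    · rw [st2 v h]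
      have := he (e.symm ⟨v, Finset.mem_compl.2 h⟩)
      rw [e.apply_symm_apply] at this
      exact this.symm
  · intro v
    exact ⟨m1 v, fun h => by_contra fun h' => h (m2 v h')⟩

theorem star_trans {G : SimpleGraph (Fin m)} {n : ℕ}
    (hext : ∀ S : Finset (Fin m), Indep G S → ∃ M, S ⊆ M ∧ Indep G M ∧ M.card = n)
    (st : Fin m → Fin m) (Y : Finset (Fin m)) (hY : Y.card = n) (h2 : ∀ v, st (st v) = v)
    (hadj : ∀ v, G.Adj v (st v)) (hYs : ∀ v, v ∈ Y ↔ st v ∉ Y)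
    (z u w : Fin m) (h1 : G.Adj u (st z)) (h3 : G.Adj w (st u)) : G.Adj w (st z) := by
  classical
  by_contra hcon
  obtain ⟨M, hM, hMi, hMn⟩ := hext {w, st z} (by
    intro a ha b hb
    simp only [Finset.mem_insert, Finset.mem_singleton] at ha hb
    rcases ha with rfl | rfl <;> rcases hb with rfl | rfl
    · exact G.irrefl
    · exact hcon
    · exact fun h => hcon h.symm
    · exact G.irrefl)
  have hw : w ∈ M := hM (by simp)
  have hz : st z ∈ M := hM (by simp)
  have hu : u ∉ M := fun h => hMi _ h _ hz h1
  have hu' : st u ∉ M := fun h => hMi _ hw _ h h3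
  -- map M to Y
  let p : Fin m → Fin m := fun v => if v ∈ Y then v else st v
  obtain ⟨y, hyY, hy1, hy2⟩ : ∃ y ∈ Y, y ∉ M ∧ st y ∉ M := by
    by_cases h : u ∈ Y
    · exact ⟨u, h, hu, hu'⟩
    · exact ⟨st u, by rw [hYs, h2]; exact h, hu', by rw [h2]; exact hu⟩
  have hpm : ∀ v ∈ M, p v ∈ Y.erase y := by
    intro v hv
    simp only [p]
    split_ifs with h
    · exact Finset.mem_erase.2 ⟨fun e => hy1 (e ▸ hv), h⟩
    · refine Finset.mem_erase.2 ⟨fun e => hy2 ?_, ?_⟩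
      · rw [← e, h2]; exact hv
      · rw [hYs, h2]; exact h
  have hinj : ∀ a ∈ M, ∀ b ∈ M, p a = p b → a = b := by
    intro a ha b hb hab
    simp only [p] at hab
    split_ifs at hab with h h' h'
    · exact hab
    · exfalso
      rw [hab] at ha
      exact hMi _ hb _ ha (hadj b)
    · exfalso
      rw [← hab] at hb
      exact hMi _ ha _ hb (hadj a)
    · rw [← h2 a, hab, h2]
  have := Finset.card_le_card_of_injOn p hpm hinj
  rw [Finset.card_erase_of_mem hyY] at this
  have := Finset.card_pos.2 ⟨y, hyY⟩
  omega

theorem wreg_main {k : Type*} [Field k] {G : SimpleGraph (Fin m)}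
    (st : Fin m → Fin m) (h2 : ∀ v, st (st v) = v) (hadj : ∀ v, G.Adj v (st v))
    (htr : ∀ z u w, G.Adj u (st z) → G.Adj w (st u) → G.Adj w (st z))
    (htw : ∀ v w, v ≠ w → G.neighborSet v ≠ G.neighborSet w)
    (l : List (Fin m))
    (hl : l.Pairwise (fun u v => u ≠ v ∧ u ≠ st v ∧ st u ≠ v ∧ st u ≠ st v)) :
    ∀ (N : ℕ) (Z : Set (Fin m)), {v | v ∉ Z ∧ st v ∉ Z}.ncard = N →
      (∀ z ∈ Z, st z ∉ Z) → (∀ z ∈ Z, ∀ u, G.Adj u (st z) → u ∈ Z) →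
      WReg (edgeIdealG k G ⊔ varIdeal k Z)
        (l.map fun v => (X v - X (st v) : MvPolynomial (Fin m) k)) := by
  intro N
  induction N using Nat.strong_induction_on with
  | _ N ih =>
  intro Z hN hZ1 hZ2
  rcases Set.eq_empty_or_nonempty {v | v ∉ Z ∧ st v ∉ Z} with hE | hE
  · have hdec : ∀ v, v ∉ Z → st v ∈ Z := by
      intro v hv
      by_contra h
      have : v ∈ {v | v ∉ Z ∧ st v ∉ Z} := ⟨hv, h⟩
      rw [hE] at this
      exact this
    have : edgeIdealG k G ⊔ varIdeal k Z = varIdeal k Z := by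
      rw [sup_eq_right, edgeIdealG, Ideal.span_le]
      rintro _ ⟨i, j, hij, rfl⟩
      by_cases hi : i ∈ Z
      · exact Ideal.mul_mem_right _ _ (X_mem_varIdeal.2 hi)
      · refine Ideal.mul_mem_left _ _ (X_mem_varIdeal.2 ?_)
        exact hZ2 _ (hdec i hi) j (by rw [h2]; exact hij.symm)
    rw [this]
    apply wreg_base st l Z hl
    intro v _
    by_cases hv : v ∈ Z
    · exact Or.inl ⟨hv, hZ1 v hv⟩
    · exact Or.inr ⟨hv, hdec v hv⟩
  · obtain ⟨v, ⟨hv, hsv⟩, hmin⟩ := Set.exists_min_image _ (fun v => (G.neighborSet (st v)).ncard)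
      (Set.toFinite _) hE
    have hup : ∀ u, G.Adj u (st v) → u ≠ v → u ∈ Z := by
      intro u hu hne
      by_contra huZ
      by_cases hsu : st u ∈ Z
      · apply hsv
        apply hZ2 _ hsu
        rw [h2]; exact hu.symm
      · have h := hmin u ⟨huZ, hsu⟩
        have hsub : G.neighborSet (st u) ⊆ G.neighborSet (st v) :=
          fun w hw => (htr v u w hu (show G.Adj (st u) w from hw).symm).symm
        have heq := Set.eq_of_subset_of_ncard_le hsub h (Set.toFinite _)
        refine htw (st u) (st v) (fun e => hne ?_) heq
        rw [← h2 u, e, h2]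
    have hdecr : ∀ Z' : Set (Fin m), Z ⊆ Z' → (v ∈ Z' ∨ st v ∈ Z') →
        {v | v ∉ Z' ∧ st v ∉ Z'}.ncard < N := by
      intro Z' hZZ' hv'
      rw [← hN]
      apply Set.ncard_lt_ncard _ (Set.toFinite _)
      refine ⟨fun w hw => ⟨fun h => hw.1 (hZZ' h), fun h => hw.2 (hZZ' h)⟩, fun h => ?_⟩
      have := h (show v ∈ {v | v ∉ Z ∧ st v ∉ Z} from ⟨hv, hsv⟩)
      exact hv'.elim this.1 this.2
    have noinc : ∀ a, ¬ G.Adj a a := fun a => G.irrefl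
    apply WReg.of_colon _ _ _ (X v) (colon_var G Z v hv)
    · apply ih _ (hdecr (Z ∪ G.neighborSet v) Set.subset_union_left
        (Or.inr (Or.inr (hadj v)))) (Z ∪ G.neighborSet v) rfl
      · rintro a (ha | ha) (hb | hb)
        · exact hZ1 a ha hb
        · -- st a adjacent to v, a ∈ Z
          exact hv (hZ2 a ha v hb)
        · exact hv (hZ2 (st a) hb v (by rw [h2]; exact ha))
        · -- v ~ a, v ~ st a
          have h := htr (st v) a v (by rw [h2]; exact (show G.Adj v a from ha).symm) hb
          rw [h2] at h
          exact noinc v h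
      · rintro a (ha | ha) u hu
        · exact Or.inl (hZ2 a ha u hu)
        · refine Or.inr ?_
          have := htr (st v) a u (by rw [h2]; exact (show G.Adj v a from ha).symm) hu
          rw [h2] at this
          exact this.symm
    · have e : edgeIdealG k G ⊔ varIdeal k Z ⊔ Ideal.span {X v} =
          edgeIdealG k G ⊔ varIdeal k (Z ∪ {v}) := by
        rw [varIdeal_union, varIdeal_singleton, sup_assoc]
      rw [e]
      have hstne : ∀ a, st a ≠ a := fun a h => noinc a (by have := hadj a; rwa [h] at this)
      apply ih _ (hdecr (Z ∪ {v}) Set.subset_union_left (Or.inl (Or.inr rfl))) (Z ∪ {v}) rfl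
      · rintro a (ha | rfl) (hb | hb)
        · exact hZ1 a ha hb
        · have : st v = a := by rw [← hb, h2]
          exact hsv (this ▸ ha)
        · exact hsv hb
        · exact hstne _ hb
      · rintro a (ha | rfl) u hu
        · exact Or.inl (hZ2 a ha u hu)
        · by_cases h : u = a
          · exact Or.inr h
          · exact Or.inl (hup u hu h)

end Comb

section Final

variable {k : Type*} [Field k] {m : ℕ}

theorem len_le_cover {G : SimpleGraph (Fin m)} {C : Finset (Fin m)}
    (hC : IsMinimalVertexCover G C) (rs : List (MvPolynomial (Fin m) k))
    (hrs : ∀ r ∈ rs, r ∈ mxIdeal k m) (hw : WReg (edgeIdealG k G) rs) :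
    rs.length ≤ m - C.card := by
  haveI : (mxIdeal k m).IsPrime := mx_isPrime
  have h1 := length_le_dim (rs.map (algebraMap _ (Localization.AtPrime (mxIdeal k m)))) _ _
    (by
      intro x hx
      obtain ⟨y, hy, rfl⟩ := List.mem_map.1 hx
      exact (IsLocalization.AtPrime.to_map_mem_maximal_iff _ (mxIdeal k m) y).2 (hrs y hy))
    (WReg.localize (mxIdeal k m).primeCompl (Localization.AtPrime (mxIdeal k m)) rs _ hw)
    (AssP.localize (mxIdeal k m) (assP_cover (k := k) hC) (varIdeal_le_mx _))
  rw [List.length_map] at h1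
  have h2 := h1.trans (dim_localize_le (mxIdeal k m).primeCompl _ _)
  rw [dim_varIdeal] at h2
  exact_mod_cast h2

theorem len_le_conn {G : SimpleGraph (Fin m)} {C₁ C₂ : Finset (Fin m)}
    (hC₁ : IsMinimalVertexCover G C₁) (hC₂ : IsMinimalVertexCover G C₂)
    (K₁ K₂ : Ideal (MvPolynomial (Fin m) k)) (hK : edgeIdealG k G = K₁ ⊓ K₂)
    (h₁ : K₁ ≤ varIdeal k (C₁ : Set (Fin m))) (h₂ : K₂ ≤ varIdeal k (C₂ : Set (Fin m)))
    (rs : List (MvPolynomial (Fin m) k))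
    (hrs : ∀ r ∈ rs, r ∈ mxIdeal k m) (hw : WReg (edgeIdealG k G) rs) :
    (rs.length : WithBot ℕ∞) ≤ ringKrullDim (MvPolynomial (Fin m) k ⧸ (K₁ ⊔ K₂)) + 1 := by
  haveI : (mxIdeal k m).IsPrime := mx_isPrime
  have h1 := connectedness (rs.map (algebraMap _ (Localization.AtPrime (mxIdeal k m)))) _
    (K₁.map (algebraMap _ _)) (K₂.map (algebraMap _ _)) _ _
    (by
      intro x hx
      obtain ⟨y, hy, rfl⟩ := List.mem_map.1 hx
      exact (IsLocalization.AtPrime.to_map_mem_maximal_iff _ (mxIdeal k m) y).2 (hrs y hy))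
    (WReg.localize (mxIdeal k m).primeCompl (Localization.AtPrime (mxIdeal k m)) rs _ hw)
    (by rw [hK]; exact IsLocalization.map_inf (mxIdeal k m).primeCompl _ K₁ K₂)
    (AssP.localize (mxIdeal k m) (assP_cover (k := k) hC₁) (varIdeal_le_mx _))
    (AssP.localize (mxIdeal k m) (assP_cover (k := k) hC₂) (varIdeal_le_mx _))
    (Ideal.map_mono h₁) (Ideal.map_mono h₂)
  rw [List.length_map, ← Ideal.map_sup] at h1
  exact h1.trans (add_le_add_left (dim_localize_le (mxIdeal k m).primeCompl _ _) 1)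

theorem edge_le_mx (G : SimpleGraph (Fin m)) : edgeIdealG k G ≤ mxIdeal k m := by
  rw [edgeIdealG, Ideal.span_le]
  rintro _ ⟨i, j, _, rfl⟩
  exact Ideal.mul_mem_left _ _ (Ideal.subset_span ⟨j, rfl⟩)

theorem isRegular_of_wreg {I : Ideal (MvPolynomial (Fin m) k)} (hI : I ≤ mxIdeal k m)
    (rs : List (MvPolynomial (Fin m) k))
    (hrs : ∀ r ∈ rs, r ∈ mxIdeal k m) (hw : WReg I rs) :
    RingTheory.Sequence.IsRegular (MvPolynomial (Fin m) k ⧸ I) rs := by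
  refine ⟨(WReg.iff_isWeaklyRegular rs I).1 hw, fun htop => ?_⟩
  have hne : mxIdeal k m ≠ ⊤ := (mx_isPrime).ne_top
  apply hne
  rw [Ideal.eq_top_iff_one]
  have h1 : (Submodule.Quotient.mk 1 : MvPolynomial (Fin m) k ⧸ I) ∈
      (Ideal.ofList rs • ⊤ : Submodule (MvPolynomial (Fin m) k) (MvPolynomial (Fin m) k ⧸ I)) := by
    rw [← htop]; trivial
  have h2 : (Ideal.ofList rs • ⊤ : Submodule (MvPolynomial (Fin m) k)
      (MvPolynomial (Fin m) k ⧸ I)) ≤ Submodule.map I.mkQ (mxIdeal k m) := by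
    rw [Submodule.smul_le]
    intro r hr x _
    obtain ⟨y, rfl⟩ := Submodule.Quotient.mk_surjective _ x
    refine ⟨r * y, Ideal.mul_mem_right _ _ ?_, rfl⟩
    have : Ideal.ofList rs ≤ mxIdeal k m := by
      rw [Ideal.ofList, Ideal.span_le]
      intro r hr
      exact hrs r hr
    exact this hr
  obtain ⟨y, hy, hy1⟩ := h2 h1
  have h3 : y - 1 ∈ I := (Submodule.Quotient.eq I).1 hy1
  have := (mxIdeal k m).sub_mem hy (hI h3)
  simpa using this

theorem pdepth_mem {I : Ideal (MvPolynomial (Fin m) k)} (hI : I ≤ mxIdeal k m) :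
    ∃ rs : List (MvPolynomial (Fin m) k), rs.length = pdepth I ∧
      (∀ r ∈ rs, r ∈ mxIdeal k m) ∧ WReg I rs := by
  have h0 : (0 : ℕ) ∈ {d : ℕ | ∃ rs : List (MvPolynomial (Fin m) k), rs.length = d ∧
      (∀ r ∈ rs, r ∈ mxIdeal k m) ∧
      RingTheory.Sequence.IsRegular (MvPolynomial (Fin m) k ⧸ I) rs} :=
    ⟨[], rfl, by simp, isRegular_of_wreg hI [] (by simp)
      ((WReg.iff_isWeaklyRegular _ _).2 (RingTheory.Sequence.IsWeaklyRegular.nil _ _))⟩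
  have key : pdepth I ∈ {d : ℕ | ∃ rs : List (MvPolynomial (Fin m) k), rs.length = d ∧
      (∀ r ∈ rs, r ∈ mxIdeal k m) ∧
      RingTheory.Sequence.IsRegular (MvPolynomial (Fin m) k ⧸ I) rs} := by
    unfold pdepth idealDepth
    by_cases hb : BddAbove {d : ℕ | ∃ rs : List (MvPolynomial (Fin m) k), rs.length = d ∧
      (∀ r ∈ rs, r ∈ mxIdeal k m) ∧
      RingTheory.Sequence.IsRegular (MvPolynomial (Fin m) k ⧸ I) rs}
    · exact Nat.sSup_mem ⟨0, h0⟩ hb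
    · rw [Nat.sSup_of_not_bddAbove hb]
      exact h0
  obtain ⟨rs, h1, h2, h3⟩ := key
  exact ⟨rs, h1, h2, (WReg.iff_isWeaklyRegular _ _).2 h3.toIsWeaklyRegular⟩

theorem dim_ge_cover {G : SimpleGraph (Fin m)} {C : Finset (Fin m)}
    (hC : IsVertexCover G C) : ((m - C.card : ℕ) : WithBot ℕ∞) ≤
      ringKrullDim (MvPolynomial (Fin m) k ⧸ edgeIdealG k G) := by
  rw [← dim_varIdeal (k := k)]
  exact dim_mono (edge_le_var hC)

theorem cm_unmixed {G : SimpleGraph (Fin m)}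
    (h : ringKrullDim (MvPolynomial (Fin m) k ⧸ edgeIdealG k G) =
      ((pdepth (edgeIdealG k G) : ℕ∞) : WithBot ℕ∞))
    {C : Finset (Fin m)} (hC : IsMinimalVertexCover G C) :
    m - C.card = pdepth (edgeIdealG k G) := by
  obtain ⟨rs, hlen, hrs, hw⟩ := pdepth_mem (edge_le_mx (k := k) G)
  have h1 := len_le_cover hC rs hrs hw
  have h2 := dim_ge_cover (k := k) hC.1
  rw [h] at h2
  have h3 : m - C.card ≤ pdepth (edgeIdealG k G) :=
    Nat.cast_le.1 (WithBot.coe_le_coe.1 h2)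
  omega

theorem not_twin {G : SimpleGraph (Fin m)} {n : ℕ} (hm : m = 2 * n)
    (hniso : ∀ v, ∃ w, G.Adj v w)
    (hG : ∀ C : Finset (Fin m), IsMinimalVertexCover G C → C.card = n)
    (hd : pdepth (edgeIdealG k G) = n) (v w : Fin m) (hvw : v ≠ w)
    (heq : G.neighborSet v = G.neighborSet w) : False := by
  classical
  have hiff : ∀ x, G.Adj v x ↔ G.Adj w x := fun x => by
    rw [← SimpleGraph.mem_neighborSet, heq, SimpleGraph.mem_neighborSet]
  obtain ⟨u, hu⟩ := hniso v
  have hcov : ∀ a : Fin m, IsVertexCover G (Finset.univ.erase a) := by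
    intro a x y hxy
    by_cases hx : x = a
    · right
      simp only [Finset.mem_erase, Finset.mem_univ, and_true]
      rintro rfl
      exact G.irrefl (hx ▸ hxy)
    · left; simp [hx]
  have hin : ∀ (a : Fin m) (C : Finset (Fin m)), C ⊆ Finset.univ.erase a → IsVertexCover G C →
      ∀ x, G.Adj a x → x ∈ C := by
    intro a C hsub hC x hx
    rcases hC a x hx with h | h
    · exact absurd (hsub h) (by simp)
    · exact h
  obtain ⟨C₁, hs₁, hC₁⟩ := exists_minimal_cover (hcov u)
  obtain ⟨C₂, hs₂, hC₂⟩ := exists_minimal_cover (hcov v)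
  obtain ⟨rs, hlen, hrs, hw⟩ := pdepth_mem (edge_le_mx (k := k) G)
  have h1 := len_le_conn hC₁ hC₂ _ _ (twin_inf (k := k) G v w heq)
    (sup_le (edge_le_var hC₁.1) (varIdeal_mono (by
      rintro x (rfl | rfl)
      · exact hin u C₁ hs₁ hC₁.1 _ hu.symm
      · exact hin u C₁ hs₁ hC₁.1 _ ((hiff u).1 hu).symm)))
    (sup_le (edge_le_var hC₂.1) (varIdeal_mono (by
      intro x hx
      exact hin v C₂ hs₂ hC₂.1 x hx)))
    rs hrs hw
  have hP : ∀ Q : Ideal (MvPolynomial (Fin m) k), Q.IsPrime →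
      (edgeIdealG k G ⊔ varIdeal k {v, w}) ⊔ (edgeIdealG k G ⊔ varIdeal k (G.neighborSet v)) ≤ Q →
      ∃ C : Finset (Fin m), n + 2 ≤ C.card ∧ ∀ i ∈ C, X i ∈ Q := by
    intro Q hQ hle
    refine ⟨Finset.univ.filter fun i => X i ∈ Q, ?_, fun i hi => (Finset.mem_filter.1 hi).2⟩
    have hI : edgeIdealG k G ≤ Q := le_sup_left.trans (le_sup_left.trans hle)
    have hvwQ : varIdeal k {v, w} ≤ Q := le_sup_right.trans (le_sup_left.trans hle)
    have hNQ : varIdeal k (G.neighborSet v) ≤ Q := le_sup_right.trans (le_sup_right.trans hle)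
    rw [varIdeal_le] at hvwQ hNQ
    have hc := cover_of_prime hQ hI
    set D := Finset.univ.filter fun i => (X i : MvPolynomial (Fin m) k) ∈ Q with hD
    have hvD : v ∈ D := by simp [hD, hvwQ v (Or.inl rfl)]
    have hwD : w ∈ D := by simp [hD, hvwQ w (Or.inr rfl)]
    have hND : ∀ x, G.Adj v x → x ∈ D := fun x hx => by
      rw [hD, Finset.mem_filter]
      exact ⟨Finset.mem_univ _, hNQ x hx⟩
    have haux : ∀ x y, G.Adj x y → (x = v ∨ x = w) → y ∈ (D.erase v).erase w := by
      intro x y hxy hx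
      have hvy : G.Adj v y := by
        rcases hx with rfl | rfl
        · exact hxy
        · exact (hiff y).2 hxy
      refine Finset.mem_erase.2 ⟨?_, Finset.mem_erase.2 ⟨?_, hND y hvy⟩⟩
      · rintro rfl
        exact G.irrefl ((hiff _).1 hvy)
      · rintro rfl
        exact G.irrefl hvy
    have hc' : IsVertexCover G ((D.erase v).erase w) := by
      intro x y hxy
      by_cases hx : x = v ∨ x = w
      · exact Or.inr (haux x y hxy hx)
      by_cases hy : y = v ∨ y = w
      · exact Or.inl (haux y x hxy.symm hy)
      push Not at hx hy
      rcases hc x y hxy with h | h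
      · left; simp [hx.1, hx.2, h]
      · right; simp [hy.1, hy.2, h]
    obtain ⟨C', hsub, hC'⟩ := exists_minimal_cover hc'
    have := Finset.card_le_card hsub
    rw [hG C' hC'] at this
    have e1 : ((D.erase v).erase w).card + 1 = (D.erase v).card :=
      Finset.card_erase_add_one (Finset.mem_erase.2 ⟨hvw.symm, hwD⟩)
    have e2 : (D.erase v).card + 1 = D.card := Finset.card_erase_add_one hvD
    omega
  have h2 := dim_le_of_primes hP
  obtain ⟨C, hCc, -⟩ := hP (mxIdeal k m) mx_isPrime
    (sup_le (sup_le (edge_le_mx G) (varIdeal_le_mx _)) (sup_le (edge_le_mx G) (varIdeal_le_mx _)))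
  have hCm : C.card ≤ m := by simpa using Finset.card_le_univ C
  have h3 := h1.trans (add_le_add_left h2 1)
  have h4 : rs.length ≤ (m - (n + 2)) + 1 := by exact_mod_cast h3
  omega

theorem wreg_exists {G : SimpleGraph (Fin m)} {n : ℕ} (hm : m = 2 * n)
    (hniso : ∀ v, ∃ w, G.Adj v w)
    (hG : ∀ C : Finset (Fin m), IsMinimalVertexCover G C → C.card = n)
    (htw : ∀ v w, v ≠ w → G.neighborSet v ≠ G.neighborSet w) :
    ∃ rs : List (MvPolynomial (Fin m) k), rs.length = n ∧
      (∀ r ∈ rs, r ∈ mxIdeal k m) ∧ WReg (edgeIdealG k G) rs := by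
  obtain ⟨st, Y, hY, h2, hadj, hYs⟩ := exists_star hm hniso hG
  refine ⟨Y.toList.map fun v => X v - X (st v), by simp [hY], ?_, ?_⟩
  · intro r hr
    obtain ⟨v, -, rfl⟩ := List.mem_map.1 hr
    exact sub_mem (Ideal.subset_span ⟨_, rfl⟩) (Ideal.subset_span ⟨_, rfl⟩)
  · have := wreg_main (k := k) st h2 hadj
      (star_trans (fun S hS => Indep.extend hm hG hS) st Y hY h2 hadj hYs) htw Y.toList
      (by
        have hnd : Y.toList.Pairwise (· ≠ ·) := Y.nodup_toList
        refine List.Pairwise.imp_of_mem ?_ hnd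
        intro a b ha hb hab
        rw [Finset.mem_toList] at ha hb
        refine ⟨hab, ?_, ?_, ?_⟩
        · rintro rfl
          exact (hYs b).1 hb ha
        · rintro rfl
          exact (hYs a).1 ha hb
        · intro e
          apply hab
          rw [← h2 a, e, h2])
      _ ∅ rfl (by simp) (by simp)
    rwa [varIdeal_empty, sup_bot_eq] at this

theorem cm_of {G : SimpleGraph (Fin m)} {n : ℕ} (hm : m = 2 * n)
    (hniso : ∀ v, ∃ w, G.Adj v w)
    (hcov : ∃ C : Finset (Fin m), IsMinimalVertexCover G C ∧ C.card = n)
    (hG : ∀ C : Finset (Fin m), IsMinimalVertexCover G C → C.card = n)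
    (htw : ∀ v w, v ≠ w → G.neighborSet v ≠ G.neighborSet w) :
    ringKrullDim (MvPolynomial (Fin m) k ⧸ edgeIdealG k G) =
      ((pdepth (edgeIdealG k G) : ℕ∞) : WithBot ℕ∞) := by
  obtain ⟨C, hC, hCn⟩ := hcov
  have hdim : ringKrullDim (MvPolynomial (Fin m) k ⧸ edgeIdealG k G) = ((n : ℕ) : WithBot ℕ∞) := by
    apply le_antisymm
    · have : ringKrullDim (MvPolynomial (Fin m) k ⧸ edgeIdealG k G) ≤ ((m - n : ℕ) : WithBot ℕ∞) := by
        apply dim_le_of_primes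
        intro Q hQ hle
        classical
        refine ⟨Finset.univ.filter fun i => X i ∈ Q, ?_, fun i hi => (Finset.mem_filter.1 hi).2⟩
        obtain ⟨C', hsub, hC'⟩ := exists_minimal_cover (cover_of_prime hQ hle)
        have := Finset.card_le_card hsub
        rw [hG C' hC'] at this
        convert this
      rwa [show m - n = n by omega] at this
    · have := dim_ge_cover (k := k) hC.1
      rwa [show m - C.card = n by omega] at this
  have hd : pdepth (edgeIdealG k G) = n := by
    apply le_antisymm
    · obtain ⟨rs, hlen, hrs, hw⟩ := pdepth_mem (edge_le_mx (k := k) G)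
      have := len_le_cover hC rs hrs hw
      omega
    · obtain ⟨rs, hlen, hrs, hw⟩ := wreg_exists (k := k) hm hniso hG htw
      unfold pdepth idealDepth
      refine le_csSup ⟨n, ?_⟩ ⟨rs, hlen, hrs, isRegular_of_wreg (edge_le_mx G) rs hrs hw⟩
      rintro d ⟨rs', rfl, hrs', hr'⟩
      have := len_le_cover hC rs' hrs' ((WReg.iff_isWeaklyRegular _ _).2 hr'.toIsWeaklyRegular)
      omega
  rw [hdim, hd]
  rfl

end Final

/-- **Theorem (Cohen–Macaulay very well-covered graphs).** Let `G` be a simple graph on `2n`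
vertices, without isolated vertices, having a minimal vertex cover of `n` elements. Then `G`
is Cohen–Macaulay (i.e. `depth R/I(G) = dim R/I(G)`) if and only if `G` is a twin-free very
well-covered graph (no two distinct vertices have the same open neighborhood, there are no
isolated vertices, and every minimal vertex cover has exactly `n` elements). -/
theorem cohenMacaulay_iff_twinFree_veryWellCovered {k : Type*} [Field k] {n : ℕ}
    (G : SimpleGraph (Fin (2 * n)))
    (hniso : ∀ v : Fin (2 * n), ∃ w : Fin (2 * n), G.Adj v w)
    (hcov : ∃ C : Finset (Fin (2 * n)), IsMinimalVertexCover G C ∧ C.card = n) :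
    (ringKrullDim (MvPolynomial (Fin (2 * n)) k ⧸ edgeIdealG k G) =
        ((pdepth (edgeIdealG k G) : ℕ∞) : WithBot ℕ∞)) ↔
      ((∀ v w : Fin (2 * n), v ≠ w → G.neighborSet v ≠ G.neighborSet w) ∧
        (∀ v : Fin (2 * n), ∃ w : Fin (2 * n), G.Adj v w) ∧
        ∀ C : Finset (Fin (2 * n)), IsMinimalVertexCover G C → C.card = n) := by
  constructor
  · intro h
    obtain ⟨C₀, hC₀, hn⟩ := hcov
    have hd : pdepth (edgeIdealG k G) = n := by
      have := cm_unmixed h hC₀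
      omega
    have hG : ∀ C : Finset (Fin (2 * n)), IsMinimalVertexCover G C → C.card = n := by
      intro C hC
      have h1 := cm_unmixed h hC
      have h2 : C.card ≤ 2 * n := by simpa using Finset.card_le_univ C
      omega
    exact ⟨fun v w hvw heq => not_twin (k := k) rfl hniso hG hd v w hvw heq, hniso, hG⟩
  · rintro ⟨htw, -, hG⟩
    exact cm_of rfl hniso hcov hG htw
end

section
/- Let H be a simple hypergraph on vertex set V such that for every vertex x of H, the hypergraph H:x is a graph whose complement is chordal. Then reg H ≤ 3, i.e. reg I(H) ≤ 3. -/
open MvPolynomial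

/-- The edge ideal `I(H)` of the hypergraph on vertices `x_1, …, x_n` with edge set `E`. -/
noncomputable def edgeIdealH (k : Type*) [Field k] {n : ℕ} (E : Set (Finset (Fin n))) :
    Ideal (MvPolynomial (Fin n) k) :=
  Ideal.span ((fun F => ∏ i ∈ F, MvPolynomial.X i) '' E)

/-- `F` is a good leaf of the hypergraph with edge set `E`: `F` is an edge and the
intersections of `F` with the other edges form a chain with respect to containment. -/
def IsGoodLeaf {n : ℕ} (E : Set (Finset (Fin n))) (F : Finset (Fin n)) : Prop :=
  F ∈ E ∧ ∀ G₁ ∈ E, ∀ G₂ ∈ E, G₁ ≠ F → G₂ ≠ F → (G₁ ∩ F ⊆ G₂ ∩ F ∨ G₂ ∩ F ⊆ G₁ ∩ F)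

/-- The hypergraph `H : x`: all minimal sets of the form `F ∖ {x}` with `F` an edge. -/
def colonHyper {n : ℕ} (E : Set (Finset (Fin n))) (x : Fin n) : Set (Finset (Fin n)) :=
  {G | (∃ F ∈ E, G = F.erase x) ∧ ∀ F ∈ E, F.erase x ⊆ G → F.erase x = G}

/-- A graph is chordal if it has no induced cycle of length `≥ 4`. -/
def IsChordalGraph {V : Type*} (G : SimpleGraph V) : Prop :=
  ∀ m : ℕ, 4 ≤ m → ¬∃ f : ZMod m ↪ V, ∀ a b : ZMod m,
    G.Adj (f a) (f b) ↔ (a = b + 1 ∨ b = a + 1)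

section helpers

variable {k : Type*} [Field k] {n : ℕ}

/-- integer-indexed homogeneous component -/
noncomputable def hcomp (z : ℤ) (p : MvPolynomial (Fin n) k) : MvPolynomial (Fin n) k :=
  if 0 ≤ z then homogeneousComponent z.toNat p else 0

theorem HomogOfDeg.zero' (d : ℤ) : HomogOfDeg (0 : MvPolynomial (Fin n) k) d := Or.inl rfl

theorem hcomp_homog (z : ℤ) (p : MvPolynomial (Fin n) k) : HomogOfDeg (hcomp z p) z := by
  unfold hcomp
  split_ifs with h
  · exact Or.inr ⟨z.toNat, Int.toNat_of_nonneg h, homogeneousComponent_isHomogeneous _ _⟩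
  · exact Or.inl rfl

theorem hcomp_sum {ι : Type*} (s : Finset ι) (z : ℤ) (f : ι → MvPolynomial (Fin n) k) :
    hcomp z (∑ i ∈ s, f i) = ∑ i ∈ s, hcomp z (f i) := by
  unfold hcomp
  split_ifs with h
  · exact map_sum _ _ _
  · simp

theorem hcomp_self {z : ℤ} {p : MvPolynomial (Fin n) k} (h : HomogOfDeg p z) :
    hcomp z p = p := by
  rcases h with rfl | ⟨m, rfl, hm⟩
  · unfold hcomp; split_ifs <;> simp
  · unfold hcomp
    rw [if_pos (by positivity)]
    simp [homogeneousComponent_of_mem hm]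

theorem hcomp_ne {z z' : ℤ} {p : MvPolynomial (Fin n) k} (h : HomogOfDeg p z') (hz : z ≠ z') :
    hcomp z p = 0 := by
  rcases h with rfl | ⟨m, rfl, hm⟩
  · unfold hcomp; split_ifs <;> simp
  · unfold hcomp
    split_ifs with h
    · rw [homogeneousComponent_of_mem hm, if_neg (by omega)]
    · rfl

theorem HomogOfDeg.mul' {a p : MvPolynomial (Fin n) k} {e z : ℤ} (h : HomogOfDeg a e)
    (h' : HomogOfDeg p z) : HomogOfDeg (a * p) (e + z) := by
  rcases h with rfl | ⟨m, rfl, hm⟩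
  · exact Or.inl (by simp)
  rcases h' with rfl | ⟨m', rfl, hm'⟩
  · exact Or.inl (by simp)
  exact Or.inr ⟨m + m', by push_cast; rfl, hm.mul hm'⟩

theorem HomogOfDeg.neg' {a : MvPolynomial (Fin n) k} {e : ℤ} (h : HomogOfDeg a e) :
    HomogOfDeg (-a) e := by
  rcases h with rfl | ⟨m, rfl, hm⟩
  · exact Or.inl (by simp)
  exact Or.inr ⟨m, rfl, (homogeneousSubmodule (Fin n) k m).neg_mem hm⟩

theorem hcomp_mul {a : MvPolynomial (Fin n) k} {e : ℤ} (h : HomogOfDeg a e) (z : ℤ)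
    (p : MvPolynomial (Fin n) k) : hcomp (e + z) (a * p) = a * hcomp z p := by
  conv_lhs => rw [← sum_homogeneousComponent p]
  rw [Finset.mul_sum, hcomp_sum]
  have key : ∀ i : ℕ, HomogOfDeg (homogeneousComponent i p) (i : ℤ) := fun i =>
    Or.inr ⟨i, rfl, homogeneousComponent_isHomogeneous _ _⟩
  by_cases hz : 0 ≤ z
  · lift z to ℕ using hz
    rw [Finset.sum_eq_single z]
    · rw [hcomp_self (h.mul' (key z))]
      simp [hcomp]
    · intro b _ hb
      exact hcomp_ne (h.mul' (key b)) (by omega)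
    · intro hz
      have : homogeneousComponent z p = 0 :=
        homogeneousComponent_eq_zero _ _ (by simpa using hz)
      rw [this]
      simp [hcomp]
  · rw [Finset.sum_eq_zero]
    · simp [hcomp, hz]
    · intro b _
      exact hcomp_ne (h.mul' (key b)) (by omega)

/-- Lifting a homogeneous matrix. -/
theorem lift_homog {ι κ μ : Type} [Fintype ι] [Fintype κ]
    (Dι : ι → ℤ) (Dκ : κ → ℤ) (Dμ : μ → ℤ)
    (A : Matrix ι κ (MvPolynomial (Fin n) k)) (B : Matrix ι μ (MvPolynomial (Fin n) k))
    (hA : ∀ r c, HomogOfDeg (A r c) (Dκ c - Dι r))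
    (hB : ∀ r c, HomogOfDeg (B r c) (Dμ c - Dι r))
    (h : ∀ c, ∃ u, A.mulVec u = fun r => B r c) :
    ∃ C : Matrix κ μ (MvPolynomial (Fin n) k),
      (∀ r c, HomogOfDeg (C r c) (Dμ c - Dκ r)) ∧ A * C = B := by
  choose u hu using h
  refine ⟨Matrix.of fun r c => hcomp (Dμ c - Dκ r) (u c r), fun r c => hcomp_homog _ _, ?_⟩
  ext1 r c
  have h1 : ∑ j, A r j * u c j = B r c := congrFun (hu c) r
  rw [Matrix.mul_apply, ← hcomp_self (hB r c), ← h1, hcomp_sum]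
  refine Finset.sum_congr rfl fun j _ => ?_
  rw [Matrix.of_apply, ← hcomp_mul (hA r j)]
  congr 1
  ring

/-- Lifting modulo an ideal, one row. -/
theorem lift_homog0 {κ μ : Type} [Fintype κ] (L : Ideal (MvPolynomial (Fin n) k))
    (hL : ∀ p ∈ L, ∀ z, hcomp z p ∈ L)
    (Dκ : κ → ℤ) (Dμ : μ → ℤ)
    (v : κ → MvPolynomial (Fin n) k) (w : μ → MvPolynomial (Fin n) k)
    (hv : ∀ c, HomogOfDeg (v c) (Dκ c))
    (hw : ∀ c, HomogOfDeg (w c) (Dμ c))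
    (h : ∀ c, ∃ u : κ → MvPolynomial (Fin n) k, ∑ j, u j * v j - w c ∈ L) :
    ∃ C : Matrix κ μ (MvPolynomial (Fin n) k),
      (∀ r c, HomogOfDeg (C r c) (Dμ c - Dκ r)) ∧ ∀ c, ∑ j, C j c * v j - w c ∈ L := by
  choose u hu using h
  refine ⟨Matrix.of fun r c => hcomp (Dμ c - Dκ r) (u c r), fun r c => hcomp_homog _ _, fun c => ?_⟩
  have := hL _ (hu c) (Dμ c)
  have h2 : hcomp (Dμ c) (∑ j, u c j * v j - w c) =
      ∑ j, hcomp (Dμ c - Dκ j) (u c j) * v j - w c := by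
    have e : hcomp (Dμ c) (∑ j, u c j * v j - w c) =
      hcomp (Dμ c) (∑ j, u c j * v j) - hcomp (Dμ c) (w c) := by
      unfold hcomp; split_ifs <;> simp
    rw [e, hcomp_self (hw c), hcomp_sum]
    congr 1
    refine Finset.sum_congr rfl fun j _ => ?_
    rw [mul_comm _ (v j), mul_comm _ (v j), ← hcomp_mul (hv j)]
    congr 1; ring
  rwa [h2] at this

end helpers
section resolutions

variable {k : Type*} [Field k] {n : ℕ}

/-- Graded free resolutions with arbitrary finite index types and bounded twists. -/
structure Res (I : Ideal (MvPolynomial (Fin n) k)) (r : ℤ) where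
  ι : ℕ → Type
  fin : ∀ i, Fintype (ι i)
  len : ℕ
  hlen : ∀ i, len < i → IsEmpty (ι i)
  D : ∀ i, ι i → ℤ
  hD : ∀ i j, D i j ≤ r + i
  A : ∀ i, Matrix (ι i) (ι (i+1)) (MvPolynomial (Fin n) k)
  v : ι 0 → MvPolynomial (Fin n) k
  hv : ∀ r, HomogOfDeg (v r) (D 0 r)
  hA : ∀ i r c, HomogOfDeg (A i r c) (D (i+1) c - D i r)
  hone : ∃ w, w ⬝ᵥ v - 1 ∈ I
  hcomp0 : ∀ w, (A 0).mulVec w ⬝ᵥ v ∈ I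
  hex0 : ∀ w, w ⬝ᵥ v ∈ I → ∃ u, (A 0).mulVec u = w
  hcomp : ∀ i w, (A i).mulVec ((A (i+1)).mulVec w) = 0
  hex : ∀ i w, (A i).mulVec w = 0 → ∃ u, (A (i+1)).mulVec u = w

attribute [instance] Res.fin

theorem Res.toGraded {I : Ideal (MvPolynomial (Fin n) k)} {r : ℤ} (F : Res I r) :
    ∃ F' : GradedFreeRes I, ∀ (i : ℕ) (j : Fin (F'.b i)), F'.D i j - (i : ℤ) ≤ r := by
  let e : ∀ i, F.ι i ≃ Fin (Fintype.card (F.ι i)) := fun i => Fintype.equivFin _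
  have hmv : ∀ i (w : Fin (Fintype.card (F.ι (i+1))) → MvPolynomial (Fin n) k),
      ((F.A i).submatrix (e i).symm (e (i+1)).symm).mulVec w =
      ((F.A i).mulVec (w ∘ e (i+1))) ∘ (e i).symm := by
    intro i w
    rw [Matrix.submatrix_mulVec_equiv]
    rfl
  have hs : ∀ w : Fin (Fintype.card (F.ι 0)) → MvPolynomial (Fin n) k,
      ∑ r, w r * F.v ((e 0).symm r) = (w ∘ e 0) ⬝ᵥ F.v := by
    intro w
    rw [← (e 0).sum_comp]
    simp [dotProduct]
  refine ⟨{ len := F.len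
            b := fun i => Fintype.card (F.ι i)
            hb := fun i hi => by
              have := F.hlen i hi
              exact Fintype.card_eq_zero
            D := fun i j => F.D i ((e i).symm j)
            A := fun i => (F.A i).submatrix (e i).symm (e (i+1)).symm
            v := fun r => F.v ((e 0).symm r)
            hv := fun r => F.hv _
            hA := fun i r c => F.hA i _ _
            haug := ?_
            hex0 := ?_
            hex := ?_ }, ?_⟩
  · intro y
    obtain ⟨y, rfl⟩ := Ideal.Quotient.mk_surjective y
    obtain ⟨w, hw⟩ := F.hone
    refine ⟨fun r => y * w ((e 0).symm r), ?_⟩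
    simp only [hs]
    rw [Ideal.Quotient.eq]
    have : ((fun r => y * w ((e 0).symm r)) ∘ e 0) ⬝ᵥ F.v = y * (w ⬝ᵥ F.v) := by
      simp [dotProduct, Finset.mul_sum, mul_assoc]
    rw [this]
    have := I.mul_mem_left y hw
    rwa [mul_sub, mul_one] at this
  · intro y
    simp only [hs, Ideal.Quotient.eq_zero_iff_mem]
    constructor
    · intro h
      obtain ⟨u, hu⟩ := F.hex0 _ h
      refine ⟨u ∘ (e 1).symm, ?_⟩
      rw [hmv]
      funext j
      have := congrFun hu ((e 0).symm j)
      simpa [Function.comp_assoc] using this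
    · rintro ⟨u, rfl⟩
      rw [hmv]
      simpa [Function.comp_assoc] using F.hcomp0 (u ∘ e 1)
  · intro i y
    simp only [hmv]
    constructor
    · intro h
      obtain ⟨u, hu⟩ := F.hex i (y ∘ e (i+1)) (by
        funext j
        simpa using congrFun h (e i j))
      refine ⟨u ∘ (e (i+1+1)).symm, ?_⟩
      funext j
      have := congrFun hu ((e (i+1)).symm j)
      rw [hmv (i+1)]
      simpa [Function.comp_assoc] using this
    · rintro ⟨u, rfl⟩
      have := F.hcomp i (u ∘ e (i+1+1))
      rw [hmv (i+1)]
      simp only [Function.comp_assoc, Equiv.symm_comp_self, Function.comp_id]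
      rw [this]
      rfl
  · intro i j
    have := F.hD i ((e i).symm j)
    simp only
    linarith

theorem Res.mono {I : Ideal (MvPolynomial (Fin n) k)} {r r' : ℤ} (h : r ≤ r') (F : Res I r) :
    Nonempty (Res I r') :=
  ⟨{ F with hD := fun i j => (F.hD i j).trans (by linarith) }⟩

theorem Res.top (r : ℤ) : Nonempty (Res (⊤ : Ideal (MvPolynomial (Fin n) k)) r) :=
  ⟨{ ι := fun _ => Empty
     fin := fun _ => inferInstance
     len := 0
     hlen := fun _ _ => inferInstance
     D := fun _ j => j.elim
     hD := fun _ j => j.elim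
     A := fun _ j => j.elim
     v := fun j => j.elim
     hv := fun j => j.elim
     hA := fun _ j => j.elim
     hone := ⟨fun j => j.elim, trivial⟩
     hcomp0 := fun _ => trivial
     hex0 := fun _ _ => ⟨fun j => j.elim, funext fun j => j.elim⟩
     hcomp := fun _ _ => funext fun j => j.elim
     hex := fun _ _ _ => ⟨fun j => j.elim, funext fun j => j.elim⟩ }⟩

/-- index types for the resolution of `R` -/
def botIdx : ℕ → Type
  | 0 => Unit
  | _ + 1 => Empty

instance botFin : ∀ i, Fintype (botIdx i)
  | 0 => inferInstanceAs (Fintype Unit)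
  | _ + 1 => inferInstanceAs (Fintype Empty)

theorem Res.bot : Nonempty (Res (⊥ : Ideal (MvPolynomial (Fin n) k)) 0) :=
  ⟨{ ι := botIdx
     fin := botFin
     len := 0
     hlen := fun i hi => match i, hi with
       | _ + 1, _ => inferInstanceAs (IsEmpty Empty)
     D := fun _ _ => 0
     hD := fun i j => by positivity
     A := fun _ => 0
     v := fun _ => 1
     hv := fun _ => Or.inr ⟨0, rfl, isHomogeneous_one _ _⟩
     hA := fun _ _ _ => Or.inl rfl
     hone := ⟨fun _ => 1, by
       change (∑ _i : Unit, (1 : MvPolynomial (Fin n) k) * 1) - 1 ∈ _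
       simp⟩
     hcomp0 := fun w => by
       rw [Matrix.zero_mulVec, zero_dotProduct]
       exact zero_mem _
     hex0 := fun w hw => by
       refine ⟨fun j => Empty.elim j, ?_⟩
       rw [Matrix.zero_mulVec]
       change (∑ i : Unit, (w i) * (1 : MvPolynomial (Fin n) k)) ∈ _ at hw
       funext j
       have hw' : w () = 0 := by
         rw [Fintype.sum_unique, mul_one] at hw
         exact hw
       exact hw'.symm
     hcomp := fun i w => Matrix.zero_mulVec _
     hex := fun i _ _ => ⟨fun j => Empty.elim j, funext fun j => Empty.elim j⟩ }⟩

/-- Comparison map. -/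
theorem exists_lift {J L : Ideal (MvPolynomial (Fin n) k)} {r s : ℤ}
    (hL : ∀ p ∈ L, ∀ z, _root_.hcomp z p ∈ L) (hJL : J ≤ L) (F : Res J r) (G : Res L s) :
    ∃ φ : ∀ i, Matrix (G.ι i) (F.ι i) (MvPolynomial (Fin n) k),
      (∀ i r c, HomogOfDeg (φ i r c) (F.D i c - G.D i r)) ∧
      (∀ w, ((φ 0).mulVec w) ⬝ᵥ G.v - w ⬝ᵥ F.v ∈ L) ∧
      ∀ i w, (G.A i).mulVec ((φ (i+1)).mulVec w) = (φ i).mulVec ((F.A i).mulVec w) := by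
  classical
  let P : ∀ i, Matrix (G.ι i) (F.ι i) (MvPolynomial (Fin n) k) → Prop := fun i φ =>
    (∀ r c, HomogOfDeg (φ r c) (F.D i c - G.D i r)) ∧
    ∀ w, ∃ u, (G.A i).mulVec u = φ.mulVec ((F.A i).mulVec w)
  have step : ∀ i φ, P i φ → ∃ φ', P (i+1) φ' ∧
      ∀ w, (G.A i).mulVec (φ'.mulVec w) = φ.mulVec ((F.A i).mulVec w) := by
    rintro i φ ⟨h1, h2⟩
    obtain ⟨C, hC, hC'⟩ := lift_homog (G.D i) (G.D (i+1)) (F.D (i+1)) (G.A i) (φ * F.A i)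
      (G.hA i) (by
        intro r c
        rw [Matrix.mul_apply]
        have : ∀ j, HomogOfDeg (φ r j * F.A i j c) (F.D (i+1) c - G.D i r) := fun j => by
          have := (h1 r j).mul' (F.hA i j c)
          convert this using 1; ring
        have e : (∑ j, φ r j * F.A i j c) =
            _root_.hcomp (F.D (i+1) c - G.D i r) (∑ j, φ r j * F.A i j c) := by
          rw [hcomp_sum]
          exact Finset.sum_congr rfl fun j _ => (hcomp_self (this j)).symm
        rw [e]
        exact hcomp_homog _ _) (by
        intro c
        obtain ⟨u, hu⟩ := h2 (Pi.single c 1)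
        refine ⟨u, ?_⟩
        rw [hu, Matrix.mulVec_mulVec]
        funext r
        simp)
    have key : ∀ w, (G.A i).mulVec (C.mulVec w) = φ.mulVec ((F.A i).mulVec w) := by
      intro w
      rw [Matrix.mulVec_mulVec, Matrix.mulVec_mulVec, hC']
    refine ⟨C, ⟨hC, ?_⟩, key⟩
    intro w
    apply G.hex
    rw [key, F.hcomp, Matrix.mulVec_zero]
  have start : ∃ φ, P 0 φ ∧ ∀ w, φ.mulVec w ⬝ᵥ G.v - w ⬝ᵥ F.v ∈ L := by
    obtain ⟨C, hC, hC'⟩ := lift_homog0 L hL (G.D 0) (F.D 0) G.v F.v G.hv F.hv (by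
      intro c
      obtain ⟨w, hw⟩ := G.hone
      refine ⟨fun j => F.v c * w j, ?_⟩
      have := L.mul_mem_left (F.v c) hw
      rw [mul_sub, mul_one, dotProduct, Finset.mul_sum] at this
      simpa [mul_assoc] using this)
    have key : ∀ w, C.mulVec w ⬝ᵥ G.v - w ⬝ᵥ F.v ∈ L := by
      intro w
      have : C.mulVec w ⬝ᵥ G.v - w ⬝ᵥ F.v =
          ∑ c, w c * (∑ j, C j c * G.v j - F.v c) := by
        simp only [Matrix.mulVec, dotProduct, mul_sub, Finset.sum_sub_distrib, Finset.mul_sum,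
          Finset.sum_mul]
        rw [Finset.sum_comm]
        congr 1
        refine Finset.sum_congr rfl fun j _ => Finset.sum_congr rfl fun j' _ => ?_
        ring
      rw [this]
      exact L.sum_mem fun c _ => L.mul_mem_left _ (hC' c)
    refine ⟨C, ⟨hC, fun w => ?_⟩, key⟩
    apply G.hex0
    have := L.add_mem (key ((F.A 0).mulVec w)) (hJL (F.hcomp0 w))
    simpa using this
  choose f hf using step
  obtain ⟨φ0, h0, h0'⟩ := start
  let Φ : ∀ i, {φ // P i φ} := fun i => Nat.rec ⟨φ0, h0⟩ (fun i φ => ⟨f i φ.1 φ.2, (hf i φ.1 φ.2).1⟩) i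
  exact ⟨fun i => (Φ i).1, fun i => (Φ i).2.1, h0', fun i => (hf i (Φ i).1 (Φ i).2).2⟩

end resolutions
section cone

variable {k : Type*} [Field k] {n : ℕ}

/-- shifted index family -/
def shiftIdx (ι : ℕ → Type) : ℕ → Type
  | 0 => Empty
  | i + 1 => ι i

/-- shifted degrees -/
def shiftD {ι : ℕ → Type} (D : ∀ i, ι i → ℤ) : ∀ i, shiftIdx ι i → ℤ
  | 0 => fun j => Empty.elim j
  | i + 1 => fun j => D i j + 1

instance shiftFin (ι : ℕ → Type) [∀ i, Fintype (ι i)] : ∀ i, Fintype (shiftIdx ι i)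
  | 0 => inferInstanceAs (Fintype Empty)
  | i + 1 => inferInstanceAs (Fintype (ι i))

/-- negated shifted differential -/
def shiftA {R : Type*} [Ring R] {ι : ℕ → Type} (A : ∀ i, Matrix (ι i) (ι (i+1)) R) :
    ∀ i, Matrix (shiftIdx ι i) (ι i) R
  | 0 => fun j => Empty.elim j
  | i + 1 => -(A i)

open Classical in
theorem Res.cone {J L : Ideal (MvPolynomial (Fin n) k)} {r : ℤ} (x : Fin n)
    (hL : ∀ p ∈ L, ∀ z, _root_.hcomp z p ∈ L) (hJL : J ≤ L)
    (hxJ : ∀ p, X x * p ∈ J → p ∈ J) (F : Res J r) (G : Res L (r - 1)) :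
    Nonempty (Res (J ⊔ Ideal.span {X x} * L) r) := by
  obtain ⟨φ, hφ, hφ0, hφs⟩ := exists_lift hL hJL F G
  -- the connecting block
  let B : ∀ i, Matrix (F.ι i ⊕ G.ι i) (F.ι i) (MvPolynomial (Fin n) k) := fun i =>
    Matrix.fromRows ((X x : MvPolynomial (Fin n) k) • (1 : Matrix (F.ι i) (F.ι i) _)) (-(φ i))
  let A' : ∀ i, Matrix ((F.ι i ⊕ G.ι i) ⊕ shiftIdx F.ι i)
      ((F.ι (i+1) ⊕ G.ι (i+1)) ⊕ F.ι i) (MvPolynomial (Fin n) k) := fun i =>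
    Matrix.fromBlocks (Matrix.fromBlocks (F.A i) 0 0 (G.A i)) (B i) 0 (shiftA F.A i)
  have hA' : ∀ i a b c, (A' i).mulVec (Sum.elim (Sum.elim a b) c) =
      Sum.elim (Sum.elim ((F.A i).mulVec a + (X x : MvPolynomial (Fin n) k) • c) ((G.A i).mulVec b - (φ i).mulVec c))
        ((shiftA F.A i).mulVec c) := by
    intro i a b c
    simp only [A', B, Matrix.fromBlocks_mulVec, Sum.elim_comp_inl, Sum.elim_comp_inr,
      Matrix.fromRows_mulVec, Matrix.zero_mulVec, Matrix.smul_mulVec, Matrix.one_mulVec,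
      Matrix.neg_mulVec]
    funext j
    rcases j with (j | j) | j <;> simp [sub_eq_add_neg]
  have hsplit : ∀ {α β γ : Type} (w : (α ⊕ β) ⊕ γ → MvPolynomial (Fin n) k),
      ∃ a b c, w = Sum.elim (Sum.elim a b) c := by
    intro α β γ w
    refine ⟨fun j => w (Sum.inl (Sum.inl j)), fun j => w (Sum.inl (Sum.inr j)),
      fun j => w (Sum.inr j), ?_⟩
    funext j
    rcases j with (j | j) | j <;> rfl
  let v' : (F.ι 0 ⊕ G.ι 0) ⊕ shiftIdx F.ι 0 → MvPolynomial (Fin n) k :=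
    Sum.elim (Sum.elim F.v ((X x : MvPolynomial (Fin n) k) • G.v)) 0
  have hv' : ∀ a b c, Sum.elim (Sum.elim a b) c ⬝ᵥ v' = a ⬝ᵥ F.v + X x * (b ⬝ᵥ G.v) := by
    intro a b c
    simp [v', dotProduct, Fintype.sum_sum_type, Finset.mul_sum, mul_left_comm]
  have hmem : ∀ p, p ∈ L → X x * p ∈ J ⊔ Ideal.span {X x} * L := fun p hp =>
    Ideal.mem_sup_right (Ideal.mul_mem_mul (Ideal.mem_span_singleton_self _) hp)
  have hE0 : ∀ c c' : shiftIdx F.ι 0 → MvPolynomial (Fin n) k, c = c' := fun c c' =>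
    funext fun j => Empty.elim j
  have hscomp : ∀ i w, (shiftA F.A i).mulVec ((F.A i).mulVec w) = 0 := by
    intro i w
    cases i with
    | zero => exact hE0 _ _
    | succ i =>
      change (-(F.A i)).mulVec _ = 0
      rw [Matrix.neg_mulVec, F.hcomp, neg_zero]
  refine ⟨{ ι := fun i => (F.ι i ⊕ G.ι i) ⊕ shiftIdx F.ι i
            fin := fun i => inferInstance
            len := max F.len G.len + 1
            hlen := ?_
            D := fun i => Sum.elim (Sum.elim (F.D i) (fun j => G.D i j + 1)) (shiftD F.D i)
            hD := ?_
            A := A'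
            v := v'
            hv := ?_
            hA := ?_
            hone := ?_
            hcomp0 := ?_
            hex0 := ?_
            hcomp := ?_
            hex := ?_ }⟩
  · intro i hi
    have h1 := F.hlen i (by omega)
    have h2 := G.hlen i (by omega)
    have h3 : IsEmpty (shiftIdx F.ι i) := by
      cases i with
      | zero => exact inferInstanceAs (IsEmpty Empty)
      | succ i => exact F.hlen i (by omega)
    infer_instance
  · rintro i ((j | j) | j)
    · exact F.hD i j
    · have := G.hD i j
      simp only [Sum.elim_inl, Sum.elim_inr]; linarith
    · cases i with
      | zero => exact Empty.elim j
      | succ i =>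
        have := F.hD i j
        simp only [Sum.elim_inr, shiftD]; push_cast; linarith
  · rintro ((j | j) | j)
    · exact F.hv j
    · have h1 : HomogOfDeg (X x : MvPolynomial (Fin n) k) 1 := Or.inr ⟨1, rfl, isHomogeneous_X _ _⟩
      have := h1.mul' (G.hv j)
      rw [add_comm] at this
      exact this
    · exact Empty.elim j
  · rintro i ((j | j) | j) ((j' | j') | j')
    · exact F.hA i j j'
    · exact Or.inl rfl
    · change HomogOfDeg (X x * (1 : Matrix (F.ι i) (F.ι i) (MvPolynomial (Fin n) k)) j j')
        (F.D i j' + 1 - F.D i j)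
      by_cases h : j = j'
      · subst h
        rw [Matrix.one_apply_eq, mul_one]
        exact Or.inr ⟨1, by push_cast; ring, isHomogeneous_X _ _⟩
      · rw [Matrix.one_apply_ne h, mul_zero]; exact Or.inl rfl
    · exact Or.inl rfl
    · have := G.hA i j j'
      change HomogOfDeg (G.A i j j') (G.D (i+1) j' + 1 - (G.D i j + 1))
      convert this using 1; ring
    · have := (hφ i j j').neg'
      change HomogOfDeg (-(φ i j j')) (F.D i j' + 1 - (G.D i j + 1))
      convert this using 1; ring
    · exact Or.inl rfl
    · exact Or.inl rfl
    · cases i with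
      | zero => exact Empty.elim j
      | succ i =>
        have := (F.hA i j j').neg'
        change HomogOfDeg (-(F.A i j j')) (F.D (i+1) j' + 1 - (F.D i j + 1))
        convert this using 1; ring
  · obtain ⟨w, hw⟩ := F.hone
    refine ⟨Sum.elim (Sum.elim w 0) 0, ?_⟩
    rw [hv', zero_dotProduct, mul_zero, add_zero]
    exact Ideal.mem_sup_left hw
  · intro w
    obtain ⟨a, b, c, rfl⟩ := hsplit w
    change F.ι 0 → _ at c
    refine Eq.subst (motive := fun p => p ∈ J ⊔ Ideal.span {X x} * L)
      ((congrArg (fun u => u ⬝ᵥ v') (hA' 0 a b c)).trans (hv' _ _ _)).symm ?_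
    have h1 := F.hcomp0 a
    have h2 := G.hcomp0 b
    have h3 := hφ0 c
    have e : ((F.A 0).mulVec a + (X x : MvPolynomial (Fin n) k) • c) ⬝ᵥ F.v
        + X x * (((G.A 0).mulVec b - (φ 0).mulVec c) ⬝ᵥ G.v) =
        (F.A 0).mulVec a ⬝ᵥ F.v + X x * ((G.A 0).mulVec b ⬝ᵥ G.v
          - ((φ 0).mulVec c ⬝ᵥ G.v - c ⬝ᵥ F.v)) := by
      rw [add_dotProduct, sub_dotProduct, smul_dotProduct, smul_eq_mul]
      ring
    rw [e]
    exact Ideal.add_mem _ (Ideal.mem_sup_left h1) (hmem _ (L.sub_mem h2 h3))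
  · intro w hw
    obtain ⟨a, b, c, rfl⟩ := hsplit w
    rw [hv'] at hw
    obtain ⟨j, hj, y, hy, hjy⟩ := Submodule.mem_sup.1 hw
    obtain ⟨l, hl, rfl⟩ := Ideal.mem_span_singleton_mul.1 hy
    obtain ⟨w1, hw1⟩ := F.hone
    set q := l - b ⬝ᵥ G.v with hq
    have hc : (q • w1) ⬝ᵥ F.v - q ∈ J := by
      have := J.mul_mem_left q hw1
      rwa [mul_sub, mul_one, ← smul_eq_mul, ← smul_dotProduct] at this
    obtain ⟨a', ha'⟩ := F.hex0 (a - (X x : MvPolynomial (Fin n) k) • (q • w1)) (by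
      have e : (a - (X x : MvPolynomial (Fin n) k) • (q • w1)) ⬝ᵥ F.v = j - X x * ((q • w1) ⬝ᵥ F.v - q) := by
        rw [sub_dotProduct, smul_dotProduct, smul_eq_mul]
        linear_combination -hjy + X x * hq
      rw [e]
      exact J.sub_mem hj (J.mul_mem_left _ hc))
    obtain ⟨b', hb'⟩ := G.hex0 (b + (φ 0).mulVec (q • w1)) (by
      have e : (b + (φ 0).mulVec (q • w1)) ⬝ᵥ G.v =
          l + (((φ 0).mulVec (q • w1)) ⬝ᵥ G.v - (q • w1) ⬝ᵥ F.v)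
            + ((q • w1) ⬝ᵥ F.v - q) := by
        rw [add_dotProduct]
        linear_combination hq
      rw [e]
      exact L.add_mem (L.add_mem hl (hφ0 _)) (hJL hc))
    refine ⟨Sum.elim (Sum.elim a' b') (q • w1), ?_⟩
    refine (hA' 0 a' b' (q • w1)).trans ?_
    rw [ha', hb']
    congr 1
    · congr 1 <;> abel
    · exact hE0 _ _
  · intro i w
    obtain ⟨a, b, c, rfl⟩ := hsplit w
    change F.ι (i+1) → _ at c
    have h1 : (A' (i+1)).mulVec (Sum.elim (Sum.elim a b) c) = _ := hA' (i+1) a b c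
    have h2 : (shiftA F.A (i+1)).mulVec c = -((F.A i).mulVec c) := Matrix.neg_mulVec _ _
    rw [h2] at h1
    refine (congrArg (A' i).mulVec h1).trans ((hA' i _ _ _).trans ?_)
    rw [Matrix.mulVec_add, F.hcomp, Matrix.mulVec_smul, Matrix.mulVec_sub, G.hcomp, hφs,
      Matrix.mulVec_neg, Matrix.mulVec_neg, hscomp]
    funext j
    rcases j with (j | j) | j <;> simp
  · intro i w hw
    obtain ⟨a, b, c, rfl⟩ := hsplit w
    change F.ι i → _ at c
    replace hw := (hA' i a b c).symm.trans hw
    have e1 : (F.A i).mulVec a + (X x : MvPolynomial (Fin n) k) • c = 0 := by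
      funext j; exact congrFun hw (Sum.inl (Sum.inl j))
    have e2 : (G.A i).mulVec b - (φ i).mulVec c = 0 := by
      funext j; exact congrFun hw (Sum.inl (Sum.inr j))
    have e3 : (shiftA F.A i).mulVec c = 0 := by
      funext j; exact congrFun hw (Sum.inr j)
    obtain ⟨c', rfl⟩ : ∃ c', (F.A i).mulVec c' = c := by
      cases i with
      | zero =>
        apply F.hex0
        apply hxJ
        have := J.neg_mem (F.hcomp0 a)
        rw [← neg_dotProduct, neg_eq_of_add_eq_zero_right e1, smul_dotProduct] at this
        exact this
      | succ i =>
        apply F.hex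
        have h2 : (shiftA F.A (i+1)).mulVec c = -((F.A i).mulVec c) := Matrix.neg_mulVec _ _
        rw [h2] at e3
        exact neg_eq_zero.1 e3
    obtain ⟨a', ha'⟩ := F.hex i (a + (X x : MvPolynomial (Fin n) k) • c') (by
      rw [Matrix.mulVec_add, Matrix.mulVec_smul, e1])
    obtain ⟨b', hb'⟩ := G.hex i (b - (φ (i+1)).mulVec c') (by
      rw [Matrix.mulVec_sub, hφs, e2])
    refine ⟨Sum.elim (Sum.elim a' b') (-c'), ?_⟩
    refine (hA' (i+1) a' b' (-c')).trans ?_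
    have h2 : (shiftA F.A (i+1)).mulVec (-c') = (F.A i).mulVec c' := by
      change (-(F.A i)).mulVec _ = _
      rw [Matrix.neg_mulVec, Matrix.mulVec_neg, neg_neg]
    rw [ha', hb', h2, Matrix.mulVec_neg]
    congr 1
    congr 1
    · rw [smul_neg]; abel
    · abel

end cone
section dirac

variable {V : Type*}

/-- a path of length `L` from `s` to `t` with interior in `T` -/
def PathIn (G : SimpleGraph V) (T : Set V) (s t : V) (L : ℕ) : Prop :=
  ∃ p : ℕ → V, p 0 = s ∧ p L = t ∧ (∀ i < L, G.Adj (p i) (p (i+1))) ∧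
    ∀ i, 0 < i → i < L → p i ∈ T

theorem PathIn.snoc {G : SimpleGraph V} {T : Set V} {s t u : V} {L : ℕ} (hL : 0 < L)
    (h : PathIn G T s t L) (ht : t ∈ T) (htu : G.Adj t u) : PathIn G T s u (L+1) := by
  obtain ⟨p, h0, h1, h2, h3⟩ := h
  refine ⟨fun i => if i ≤ L then p i else u, by simp [h0], by simp, ?_, ?_⟩
  · intro i hi
    rcases Nat.lt_succ_iff_lt_or_eq.1 hi with h | rfl
    · have h' : i + 1 ≤ L := h
      simp only [h.le, h', if_true]; exact h2 i h
    · simpa [h1] using htu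
  · intro i hi hi'
    have : i ≤ L := by omega
    simp only [this, if_true]
    rcases this.lt_or_eq with h | rfl
    · exact h3 i hi h
    · rw [h1]; exact ht

theorem no_path {G : SimpleGraph V} (hG : IsChordalGraph G) {v s t : V} {T : Set V}
    (hT : ∀ u ∈ T, u ≠ v ∧ ¬ G.Adj v u) (hs : G.Adj v s) (ht : G.Adj v t) (hst : s ≠ t)
    (hadj : ¬ G.Adj s t) (hex : ∃ L, PathIn G T s t L) : False := by
  classical
  obtain ⟨p, h0, h1, h2, h3⟩ := Nat.find_spec hex
  have hmin : ∀ m < Nat.find hex, ¬ PathIn G T s t m := fun m => Nat.find_min hex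
  set L := Nat.find hex with hLdef
  clear_value L
  have hL0 : L ≠ 0 := by rintro rfl; exact hst (h0.symm.trans h1)
  have hL1 : L ≠ 1 := by
    rintro rfl
    have := h2 0 (by omega)
    rw [zero_add, h0, h1] at this
    exact hadj this
  have short : ∀ i d, 0 < d → i + d + 1 ≤ L → ¬ G.Adj (p i) (p (i + d + 1)) := by
    intro i d hd hi ha
    refine hmin (L - d) (by omega) ⟨fun m => if m ≤ i then p m else p (m + d), by simp [h0], ?_, ?_, ?_⟩
    · have : ¬ (L - d ≤ i) := by omega
      simp only [this, if_false]
      rw [Nat.sub_add_cancel (by omega), h1]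
    · intro m hm
      by_cases hmi : m < i
      · have : m + 1 ≤ i := hmi
        simp only [hmi.le, this, if_true]; exact h2 m (by omega)
      · by_cases hmi' : m = i
        · subst hmi'
          simp only [le_refl, if_true]
          rw [if_neg (by omega)]
          convert ha using 2; ring
        · dsimp only
          rw [if_neg (by omega), if_neg (by omega)]
          have := h2 (m + d) (by omega)
          convert this using 2; ring
    · intro m hm hm'
      dsimp only
      split_ifs
      · exact h3 _ hm (by omega)
      · exact h3 _ (by omega) (by omega)
  have inj : ∀ i d, 0 < d → i + d ≤ L → p i ≠ p (i + d) := by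
    intro i d hd hi ha
    by_cases hid : i + d = L
    · -- then p i = t
      rw [hid, h1] at ha
      by_cases hi0 : i = 0
      · subst hi0; exact hst (h0.symm.trans ha)
      · exact (hT _ (h3 i (by omega) (by omega))).2 (ha ▸ ht)
    · have hh := h2 (i + d) (by omega)
      rw [← ha] at hh
      exact short i d hd (by omega) hh
  have adjiff : ∀ i j, i < j → j ≤ L → (G.Adj (p i) (p j) ↔ j = i + 1) := by
    intro i j hij hj
    constructor
    · intro ha
      by_contra hne
      obtain ⟨d, rfl⟩ : ∃ d, j = i + d + 1 := ⟨j - i - 1, by omega⟩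
      exact short i d (by omega) hj ha
    · rintro rfl
      exact h2 i (by omega)
  have vadj : ∀ i ≤ L, (G.Adj v (p i) ↔ i = 0 ∨ i = L) := by
    intro i hi
    constructor
    · intro ha
      by_contra hne
      exact (hT _ (h3 i (by omega) (by omega))).2 ha
    · rintro (rfl | rfl)
      · rwa [h0]
      · rwa [h1]
  have vne : ∀ i ≤ L, p i ≠ v := by
    intro i hi he
    by_cases h : i = 0 ∨ i = L
    · have := (vadj i hi).2 h
      rw [he] at this
      exact G.loopless.irrefl _ this
    · exact (hT _ (h3 i (by omega) (by omega))).1 he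
  let g : ℕ → V := fun i => if i ≤ L then p i else v
  have ginj : ∀ i j, i < j → j ≤ L + 1 → g i ≠ g j := by
    intro i j hij hj
    have hi : i ≤ L := by omega
    by_cases hjL : j ≤ L
    · simp only [g, hi, hjL, if_true]
      obtain ⟨d, rfl⟩ : ∃ d, j = i + d := ⟨j - i, by omega⟩
      exact inj i d (by omega) hjL
    · simp only [g, hi, hjL, if_true, if_false]
      exact vne i hi
  have gadj : ∀ i j, i < j → j ≤ L + 1 → (G.Adj (g i) (g j) ↔ (j = i + 1 ∨ (i = 0 ∧ j = L + 1))) := by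
    intro i j hij hj
    have hi : i ≤ L := by omega
    by_cases hjL : j ≤ L
    · simp only [g, hi, hjL, if_true]
      rw [adjiff i j hij hjL]
      omega
    · simp only [g, hi, hjL, if_true, if_false]
      rw [G.adj_comm, vadj i hi]
      omega
  -- cycle
  refine hG (L + 2) (by omega) ⟨⟨fun a : Fin (L+2) => g a.val, ?_⟩, ?_⟩
  · intro a b hab
    rcases lt_trichotomy a.val b.val with h | h | h
    · exact absurd hab (ginj _ _ h (by omega))
    · exact Fin.ext h
    · exact absurd hab.symm (ginj _ _ h (by omega))
  · intro a b
    change Fin (L+2) at a b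
    change G.Adj (g a.val) (g b.val) ↔ ((a : Fin (L+2)) = b + 1 ∨ (b : Fin (L+2)) = a + 1)
    have key : ∀ c d : Fin (L+2), c = d + 1 ↔ (c.val = d.val + 1 ∨ (c.val = 0 ∧ d.val = L + 1)) := by
      intro c d
      rw [Fin.ext_iff, Fin.val_add_one]
      split_ifs with h
      · have : d.val = L + 1 := by rw [h]; rfl
        omega
      · have : d.val ≠ L + 1 := fun h' => h (Fin.ext h')
        omega
    rw [key, key]
    rcases lt_trichotomy a.val b.val with h | h | h
    · rw [gadj _ _ h (by omega)]; omega
    · rw [h]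
      have := G.loopless.irrefl (g b.val)
      simp only [this, false_iff]; omega
    · rw [G.adj_comm, gadj _ _ h (by omega)]; omega

/-- simplicial vertex in `W` -/
def Simp (G : SimpleGraph V) (W : Finset V) (w : V) : Prop :=
  ∀ a ∈ W, ∀ b ∈ W, G.Adj w a → G.Adj w b → a ≠ b → G.Adj a b

theorem dirac_aux {G : SimpleGraph V} (hG : IsChordalGraph G) (N : ℕ) :
    ∀ W : Finset V, W.card ≤ N → ∀ v ∈ W, (∃ u ∈ W, u ≠ v ∧ ¬ G.Adj v u) →
      ∃ w ∈ W, w ≠ v ∧ ¬ G.Adj v w ∧ Simp G W w := by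
  classical
  induction N with
  | zero =>
    intro W hW v hv
    simp only [nonpos_iff_eq_zero, Finset.card_eq_zero] at hW
    simp [hW] at hv
  | succ N ih =>
    rintro W hW v hv ⟨u, huW, huv, hnu⟩
    let T : Set V := {y | y ∈ W ∧ y ≠ v ∧ ¬ G.Adj v y}
    let R : V → V → Prop := fun a b => a ∈ T ∧ b ∈ T ∧ G.Adj a b
    let C : Set V := {y | Relation.ReflTransGen R u y}
    have huT : u ∈ T := ⟨huW, huv, hnu⟩
    have hCT : ∀ y ∈ C, y ∈ T := by
      intro y hy
      rcases Relation.ReflTransGen.cases_tail hy with h | ⟨z, _, h⟩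
      · exact h ▸ huT
      · exact h.2.1
    have hCstep : ∀ y ∈ C, ∀ z ∈ T, G.Adj y z → z ∈ C := fun y hy z hz h =>
      Relation.ReflTransGen.tail hy ⟨hCT y hy, hz, h⟩
    let S : Set V := {y | y ∈ W ∧ y ∉ C ∧ ∃ c ∈ C, G.Adj c y}
    have hSv : ∀ s ∈ S, G.Adj v s := by
      rintro s ⟨hsW, hsC, c, hc, hcs⟩
      by_contra hns
      by_cases hsv : s = v
      · subst hsv
        exact (hCT c hc).2.2 hcs.symm
      · exact hsC (hCstep c hc s ⟨hsW, hsv, hns⟩ hcs)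
    -- connectivity within C
    have hRsymm : ∀ a b, R a b → R b a := fun a b h => ⟨h.2.1, h.1, h.2.2.symm⟩
    have hCsymm : ∀ y, Relation.ReflTransGen R u y → Relation.ReflTransGen R y u := by
      intro y hy
      induction hy with
      | refl => exact Relation.ReflTransGen.refl
      | tail _ hyz ih' => exact Relation.ReflTransGen.head (hRsymm _ _ hyz) ih'
    have hpath : ∀ c1 s, G.Adj s c1 → c1 ∈ T → ∀ y, Relation.ReflTransGen R c1 y →
        ∃ L, 0 < L ∧ y ∈ T ∧ PathIn G T s y L := by
      intro c1 s hs hc1 y hy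
      induction hy with
      | refl =>
        refine ⟨1, one_pos, hc1, fun i => if i = 0 then s else c1, by simp, by simp, ?_, ?_⟩
        · intro i hi
          obtain rfl : i = 0 := by omega
          simpa using hs
        · intro i hi hi'
          omega
      | tail _ hyz ih' =>
        obtain ⟨L, hL, hyT, hp⟩ := ih'
        exact ⟨L + 1, by omega, hyz.2.1, hp.snoc hL hyT hyz.2.2⟩
    have hSclique : ∀ s ∈ S, ∀ t ∈ S, s ≠ t → G.Adj s t := by
      intro s hs t ht hst
      by_contra hadj
      obtain ⟨_, _, c1, hc1, hs1⟩ := hs.out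
      obtain ⟨_, _, c2, hc2, ht2⟩ := ht.out
      have h12 : Relation.ReflTransGen R c1 c2 :=
        (hCsymm _ hc1).trans hc2
      obtain ⟨L, hL, hT2, hp⟩ := hpath c1 s hs1.symm (hCT _ hc1) c2 h12
      exact no_path hG (fun u hu => hu.2) (hSv s hs) (hSv t ht) hst hadj
        ⟨L + 1, hp.snoc hL hT2 ht2⟩
    let W' : Finset V := W.filter (fun y => y ∈ C ∨ y ∈ S)
    have hvW' : v ∉ W' := by
      intro h
      rcases (Finset.mem_filter.1 h).2 with h | h
      · exact (hCT v h).2.1 rfl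
      · exact G.loopless.irrefl _ (hSv v h)
    have hcard : W'.card ≤ N := by
      have : W'.card < W.card :=
        Finset.card_lt_card ⟨Finset.filter_subset _ _, fun h => hvW' (h hv)⟩
      omega
    have hCW' : ∀ c ∈ C, c ∈ W' := fun c hc => Finset.mem_filter.2 ⟨(hCT c hc).1, Or.inl hc⟩
    have hSW' : ∀ c ∈ S, c ∈ W' := fun c hc => Finset.mem_filter.2 ⟨hc.1, Or.inr hc⟩
    suffices h : ∃ w ∈ C, Simp G W' w by
      obtain ⟨w, hw, hs⟩ := h
      refine ⟨w, (hCT w hw).1, (hCT w hw).2.1, (hCT w hw).2.2, ?_⟩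
      have hnb : ∀ a ∈ W, G.Adj w a → a ∈ W' := by
        intro a ha hwa
        by_cases hac : a ∈ C
        · exact hCW' a hac
        · exact hSW' a ⟨ha, hac, w, hw, hwa⟩
      exact fun a ha b hb h1 h2 => hs a (hnb a ha h1) b (hnb b hb h2) h1 h2
    by_cases h1 : ∃ s ∈ S, ∃ y ∈ W', y ≠ s ∧ ¬ G.Adj s y
    · obtain ⟨s, hs, hy⟩ := h1
      obtain ⟨w, hw, hws, hnw, hsimp⟩ := ih W' hcard s (hSW' s hs) hy
      rcases (Finset.mem_filter.1 hw).2 with h | h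
      · exact ⟨w, h, hsimp⟩
      · exact absurd (hSclique s hs w h hws.symm) hnw
    · by_cases h2 : ∃ c ∈ C, ∃ y ∈ W', y ≠ c ∧ ¬ G.Adj c y
      · obtain ⟨c, hc, hy⟩ := h2
        obtain ⟨w, hw, hws, hnw, hsimp⟩ := ih W' hcard c (hCW' c hc) hy
        rcases (Finset.mem_filter.1 hw).2 with h | h
        · exact ⟨w, h, hsimp⟩
        · exact absurd ⟨w, h, c, hCW' c hc, hws.symm, fun h => hnw h.symm⟩ h1
      · refine ⟨u, Relation.ReflTransGen.refl, fun a ha b hb _ _ hab => ?_⟩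
        by_contra hadj
        rcases (Finset.mem_filter.1 ha).2 with h | h
        · exact h2 ⟨a, h, b, hb, hab.symm, hadj⟩
        · exact h1 ⟨a, h, b, hb, hab.symm, hadj⟩

theorem exists_simp {G : SimpleGraph V} (hG : IsChordalGraph G) (W : Finset V)
    (hW : W.Nonempty) : ∃ w ∈ W, Simp G W w := by
  by_cases h : ∃ v ∈ W, ∃ u ∈ W, u ≠ v ∧ ¬ G.Adj v u
  · obtain ⟨v, hv, hu⟩ := h
    obtain ⟨w, hw, _, _, hs⟩ := dirac_aux hG W.card W le_rfl v hv hu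
    exact ⟨w, hw, hs⟩
  · obtain ⟨w, hw⟩ := hW
    refine ⟨w, hw, fun a ha b hb _ _ hab => ?_⟩
    by_contra hadj
    exact h ⟨a, ha, b, hb, hab.symm, hadj⟩

end dirac
section edges

variable {k : Type*} [Field k] {n : ℕ}

theorem prod_X_eq (F : Finset (Fin n)) :
    (∏ i ∈ F, (X i : MvPolynomial (Fin n) k)) =
      monomial (∑ i ∈ F, Finsupp.single i 1) (1 : k) := by
  rw [monomial_sum_one]
  rfl

theorem indicator_apply (F : Finset (Fin n)) (j : Fin n) :
    (∑ i ∈ F, Finsupp.single i 1 : Fin n →₀ ℕ) j = if j ∈ F then 1 else 0 := by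
  rw [Finsupp.finsetSum_apply]
  simp [Finsupp.single_apply]

theorem mem_edgeIdeal {E : Set (Finset (Fin n))} {p : MvPolynomial (Fin n) k} :
    p ∈ edgeIdealH k E ↔ ∀ m ∈ p.support, ∃ F ∈ E, ∀ i ∈ F, m i ≠ 0 := by
  have : edgeIdealH k E = Ideal.span ((fun s => monomial s (1 : k)) ''
      ((fun F : Finset (Fin n) => ∑ i ∈ F, Finsupp.single i 1) '' E)) := by
    unfold edgeIdealH
    rw [Set.image_image]
    congr 1
    exact Set.image_congr fun F _ => prod_X_eq F
  rw [this, mem_ideal_span_monomial_image]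
  refine forall₂_congr fun m _ => ?_
  simp only [Set.exists_mem_image]
  refine exists_congr fun F => and_congr_right fun _ => ?_
  constructor
  · intro h i hi
    have := h i
    rw [indicator_apply, if_pos hi] at this
    omega
  · intro h i
    rw [indicator_apply]
    split_ifs with hi
    · have := h i hi; omega
    · exact Nat.zero_le _

/-- shorthand -/
def Reg (k : Type*) [Field k] {n : ℕ} (E : Set (Finset (Fin n))) (r : ℤ) : Prop :=
  Nonempty (Res (edgeIdealH k E) r)

theorem Reg.mono {E : Set (Finset (Fin n))} {r r' : ℤ} (h : r ≤ r') (hE : Reg k E r) :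
    Reg k E r' := by
  obtain ⟨F⟩ := hE
  exact F.mono h

theorem edgeIdeal_congr {E E' : Set (Finset (Fin n))}
    (h : ∀ F ∈ E, ∃ F' ∈ E', F' ⊆ F) (h' : ∀ F ∈ E', ∃ F' ∈ E, F' ⊆ F) :
    edgeIdealH k E = edgeIdealH k E' := by
  ext p
  rw [mem_edgeIdeal, mem_edgeIdeal]
  refine forall₂_congr fun m _ => ⟨?_, ?_⟩
  · rintro ⟨F, hF, hm⟩
    obtain ⟨F', hF', hs⟩ := h F hF
    exact ⟨F', hF', fun i hi => hm i (hs hi)⟩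
  · rintro ⟨F, hF, hm⟩
    obtain ⟨F', hF', hs⟩ := h' F hF
    exact ⟨F', hF', fun i hi => hm i (hs hi)⟩

theorem Reg.congr {E E' : Set (Finset (Fin n))} {r : ℤ} (hE : Reg k E' r)
    (h : ∀ F ∈ E, ∃ F' ∈ E', F' ⊆ F) (h' : ∀ F ∈ E', ∃ F' ∈ E, F' ⊆ F) : Reg k E r := by
  unfold Reg at *
  rwa [edgeIdeal_congr h h']

theorem Reg.empty : Reg k (∅ : Set (Finset (Fin n))) 0 := by
  unfold Reg edgeIdealH
  rw [Set.image_empty, Ideal.span_empty]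
  exact Res.bot

theorem Reg.of_empty_mem {E : Set (Finset (Fin n))} (h : ∅ ∈ E) (r : ℤ) : Reg k E r := by
  have : edgeIdealH k E = ⊤ := by
    rw [Ideal.eq_top_iff_one]
    exact Ideal.subset_span ⟨∅, h, by simp⟩
  unfold Reg
  rw [this]
  exact Res.top r

theorem edgeIdeal_le_erase (E : Set (Finset (Fin n))) (x : Fin n) :
    edgeIdealH k {F ∈ E | x ∉ F} ≤ edgeIdealH k ((fun F => F.erase x) '' E) := by
  intro p hp
  rw [mem_edgeIdeal] at hp ⊢
  intro m hm
  obtain ⟨F, ⟨hF, hxF⟩, h⟩ := hp m hm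
  exact ⟨F.erase x, Set.mem_image_of_mem _ hF, fun i hi => h i (Finset.mem_of_mem_erase hi)⟩

theorem edgeIdeal_decomp (E : Set (Finset (Fin n))) (x : Fin n) :
    edgeIdealH k E = edgeIdealH k {F ∈ E | x ∉ F} ⊔
        Ideal.span {X x} * edgeIdealH k ((fun F => F.erase x) '' E) := by
  apply le_antisymm
  · refine Ideal.span_le.2 ?_
    rintro _ ⟨F, hF, rfl⟩
    by_cases hxF : x ∈ F
    · refine Ideal.mem_sup_right ?_
      dsimp only
      rw [← Finset.mul_prod_erase F _ hxF]
      refine Ideal.mul_mem_mul (Ideal.mem_span_singleton_self _) ?_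
      exact Ideal.subset_span ⟨F.erase x, Set.mem_image_of_mem _ hF, rfl⟩
    · exact Ideal.mem_sup_left (Ideal.subset_span ⟨F, ⟨hF, hxF⟩, rfl⟩)
  · refine sup_le (Ideal.span_mono (Set.image_mono fun F hF => hF.1)) ?_
    intro p hp
    obtain ⟨l, hl, rfl⟩ := Ideal.mem_span_singleton_mul.1 hp
    rw [mem_edgeIdeal] at hl ⊢
    intro m hm
    rw [support_X_mul, Finset.mem_map] at hm
    obtain ⟨m', hm', rfl⟩ := hm
    obtain ⟨_, ⟨F, hF, rfl⟩, h⟩ := hl m' hm'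
    refine ⟨F, hF, fun i hi => ?_⟩
    by_cases hix : i = x
    · subst hix; simp
    · have := h i (Finset.mem_erase.2 ⟨hix, hi⟩)
      simp [this]

theorem edgeIdeal_hcomp (E : Set (Finset (Fin n))) (p : MvPolynomial (Fin n) k)
    (hp : p ∈ edgeIdealH k E) (z : ℤ) : hcomp z p ∈ edgeIdealH k E := by
  rw [mem_edgeIdeal] at hp ⊢
  intro m hm
  refine hp m ?_
  unfold hcomp at hm
  split_ifs at hm with h
  · rw [mem_support_iff, coeff_homogeneousComponent] at hm
    rw [mem_support_iff]
    split_ifs at hm with h'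
    · exact hm
    · exact absurd rfl hm
  · simp at hm

theorem edgeIdeal_colon (E : Set (Finset (Fin n))) (x : Fin n) (p : MvPolynomial (Fin n) k)
    (hp : X x * p ∈ edgeIdealH k {F ∈ E | x ∉ F}) : p ∈ edgeIdealH k {F ∈ E | x ∉ F} := by
  rw [mem_edgeIdeal] at hp ⊢
  intro m hm
  obtain ⟨F, ⟨hF, hxF⟩, h⟩ := hp (Finsupp.single x 1 + m) (by
    rw [mem_support_iff, coeff_X_mul]
    exact mem_support_iff.1 hm)
  refine ⟨F, ⟨hF, hxF⟩, fun i hi => ?_⟩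
  have hix : x ≠ i := fun e => hxF (e ▸ hi)
  have := h i hi
  simpa [Finsupp.single_apply, hix] using this

theorem Reg.step {E : Set (Finset (Fin n))} {r : ℤ} (x : Fin n)
    (hJ : Reg k {F ∈ E | x ∉ F} r) (hL : Reg k ((fun F => F.erase x) '' E) (r - 1)) :
    Reg k E r := by
  obtain ⟨F⟩ := hJ
  obtain ⟨G⟩ := hL
  unfold Reg
  rw [edgeIdeal_decomp E x]
  exact Res.cone x (edgeIdeal_hcomp _) (edgeIdeal_le_erase E x) (edgeIdeal_colon E x) F G

theorem Reg.vars (N : Finset (Fin n)) : Reg k {F | ∃ y ∈ N, F = {y}} 0 := by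
  induction N using Finset.induction_on with
  | empty => exact Reg.empty.congr (by simp) (by simp)
  | insert x N hx ih =>
    refine Reg.step x ?_ (Reg.of_empty_mem (by exact ⟨{x}, ⟨x, by simp, rfl⟩, by simp⟩) _)
    refine ih.congr ?_ ?_
    · rintro _ ⟨⟨y, hy, rfl⟩, hxy⟩
      have : y ≠ x := fun e => hxy (by simp [e])
      exact ⟨{y}, ⟨y, Finset.mem_of_mem_insert_of_ne hy this, rfl⟩, le_rfl⟩
    · rintro _ ⟨y, hy, rfl⟩
      refine ⟨{y}, ⟨⟨y, Finset.mem_insert_of_mem hy, rfl⟩, ?_⟩, le_rfl⟩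
      intro h
      rw [Finset.mem_singleton] at h
      exact hx (h ▸ hy)

/-- The theorem of Fröberg (one direction) -/
theorem Reg.graph (G : SimpleGraph (Fin n)) (hG : IsChordalGraph Gᶜ) (W : Finset (Fin n)) :
    Reg k {F | ∃ a ∈ W, ∃ b ∈ W, G.Adj a b ∧ F = {a, b}} 1 := by
  classical
  induction W using Finset.strongInduction with
  | H W ih =>
    rcases W.eq_empty_or_nonempty with rfl | hW
    · exact (Reg.empty.mono zero_le_one).congr (by simp) (by simp)
    obtain ⟨x, hxW, hs⟩ := exists_simp hG W hW
    refine Reg.step x ((ih (W.erase x) (Finset.erase_ssubset hxW)).congr ?_ ?_)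
      ((Reg.vars (W.filter (fun y => G.Adj x y))).congr ?_ ?_)
    · rintro _ ⟨⟨a, ha, b, hb, hab, rfl⟩, hxF⟩
      simp only [Finset.mem_insert, Finset.mem_singleton, not_or] at hxF
      exact ⟨{a, b}, ⟨a, Finset.mem_erase.2 ⟨Ne.symm hxF.1, ha⟩, b,
        Finset.mem_erase.2 ⟨Ne.symm hxF.2, hb⟩, hab, rfl⟩, le_rfl⟩
    · rintro _ ⟨a, ha, b, hb, hab, rfl⟩
      rw [Finset.mem_erase] at ha hb
      refine ⟨{a, b}, ⟨⟨a, ha.2, b, hb.2, hab, rfl⟩, ?_⟩, le_rfl⟩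
      simp only [Finset.mem_insert, Finset.mem_singleton, not_or]
      exact ⟨Ne.symm ha.1, Ne.symm hb.1⟩
    · rintro _ ⟨_, ⟨a, ha, b, hb, hab, rfl⟩, rfl⟩
      have : ∃ y ∈ ({a, b} : Finset (Fin n)), y ∈ W ∧ G.Adj x y := by
        by_contra hcon
        push Not at hcon
        have h1 := hcon a (by simp) ha
        have h2 := hcon b (by simp) hb
        have hax : x ≠ a := by rintro rfl; exact h2 hab
        have hbx : x ≠ b := by rintro rfl; exact h1 hab.symm
        have := hs a ha b hb ((SimpleGraph.compl_adj _ _ _).2 ⟨hax, h1⟩)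
          ((SimpleGraph.compl_adj _ _ _).2 ⟨hbx, h2⟩) hab.ne
        exact ((SimpleGraph.compl_adj _ _ _).1 this).2 hab
      obtain ⟨y, hy, hyW, hxy⟩ := this
      refine ⟨{y}, ⟨y, Finset.mem_filter.2 ⟨hyW, hxy⟩, rfl⟩, ?_⟩
      rw [Finset.singleton_subset_iff]
      exact Finset.mem_erase.2 ⟨hxy.ne.symm, hy⟩
    · rintro _ ⟨y, hy, rfl⟩
      rw [Finset.mem_filter] at hy
      refine ⟨_, ⟨{x, y}, ⟨x, hxW, y, hy.1, hy.2, rfl⟩, rfl⟩, ?_⟩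
      intro z hz
      simp only [Finset.mem_erase, Finset.mem_insert, Finset.mem_singleton] at hz ⊢
      tauto

theorem Reg.main (E : Set (Finset (Fin n)))
    (hx : ∀ x : Fin n,
      (∀ G ∈ colonHyper E x, G.card = 2) ∧
        IsChordalGraph
          ((SimpleGraph.fromRel
            (fun a b : Fin n => ({a, b} : Finset (Fin n)) ∈ colonHyper E x))ᶜ))
    (W : Finset (Fin n)) : Reg k {F ∈ E | F ⊆ W} 2 := by
  classical
  induction W using Finset.induction_on with
  | empty =>
    by_cases h : ∅ ∈ E
    · exact Reg.of_empty_mem (by exact ⟨h, le_rfl⟩) _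
    · refine (Reg.empty.mono zero_le_two).congr ?_ (by simp)
      rintro F ⟨hF, hF'⟩
      rw [Finset.subset_empty] at hF'
      exact absurd (hF' ▸ hF) h
  | insert x W hxW ih =>
    refine Reg.step x (ih.congr ?_ ?_) ((Reg.graph _ (hx x).2 W).congr ?_ ?_)
    · rintro F ⟨⟨hF, hFW⟩, hxF⟩
      exact ⟨F, ⟨hF, (Finset.subset_insert_iff_of_notMem hxF).1 hFW⟩, le_rfl⟩
    · rintro F ⟨hF, hFW⟩
      exact ⟨F, ⟨⟨hF, hFW.trans (Finset.subset_insert _ _)⟩, fun h => hxW (hFW h)⟩, le_rfl⟩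
    · rintro _ ⟨F, ⟨hF, hFW⟩, rfl⟩
      obtain ⟨G, ⟨⟨F', hF', rfl⟩, hsub⟩, hmin⟩ :=
        Set.Finite.exists_minimal (s := {G | (∃ F ∈ E, G = F.erase x) ∧ G ⊆ F.erase x})
          (Set.toFinite _) ⟨_, ⟨F, hF, rfl⟩, le_rfl⟩
      have hG : F'.erase x ∈ colonHyper E x := by
        refine ⟨⟨F', hF', rfl⟩, fun F'' hF'' hs => ?_⟩
        exact le_antisymm hs (hmin ⟨⟨F'', hF'', rfl⟩, hs.trans hsub⟩ hs)
      obtain ⟨a, b, hab, hGab⟩ := Finset.card_eq_two.1 ((hx x).1 _ hG)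
      have hW' : F'.erase x ⊆ W := hsub.trans (Finset.subset_insert_iff.1 hFW)
      refine ⟨F'.erase x, ⟨a, hW' (by simp [hGab]), b, hW' (by simp [hGab]), ?_, hGab⟩, hsub⟩
      rw [SimpleGraph.fromRel_adj]
      exact ⟨hab, Or.inl (hGab ▸ hG)⟩
    · rintro _ ⟨a, ha, b, hb, hab, rfl⟩
      rw [SimpleGraph.fromRel_adj] at hab
      have hmem : ({a, b} : Finset (Fin n)) ∈ colonHyper E x := by
        rcases hab.2 with h | h
        · exact h
        · rwa [Finset.pair_comm]
      obtain ⟨⟨F, hF, hFe⟩, _⟩ := hmem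
      refine ⟨_, ⟨F, ⟨hF, ?_⟩, rfl⟩, hFe.symm.le⟩
      rw [Finset.subset_insert_iff, ← hFe]
      intro z hz
      simp only [Finset.mem_insert, Finset.mem_singleton] at hz
      rcases hz with rfl | rfl <;> assumption

end edges

/-- **Theorem.** Let `H` be a simple hypergraph such that for every vertex `x` the
hypergraph `H : x` is a graph (all of its edges have two vertices) whose complement is
chordal. Then `reg I(H) ≤ 3`. -/
theorem reg_le_three_of_colon_chordal {k : Type*} [Field k] {n : ℕ}
    (E : Set (Finset (Fin n)))
    (hsimple : ∀ F₁ ∈ E, ∀ F₂ ∈ E, F₁ ⊆ F₂ → F₁ = F₂)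
    (hx : ∀ x : Fin n,
      (∀ G ∈ colonHyper E x, G.card = 2) ∧
        IsChordalGraph
          ((SimpleGraph.fromRel
            (fun a b : Fin n => ({a, b} : Finset (Fin n)) ∈ colonHyper E x))ᶜ)) :
    regIdeal (edgeIdealH k E) ≤ 3 := by
  have h := Reg.main (k := k) E hx Finset.univ
  have hE : {F ∈ E | F ⊆ Finset.univ} = E := by
    ext F; simp
  rw [hE] at h
  obtain ⟨R⟩ := h
  have hmem := R.toGraded
  unfold regIdeal regQuot
  by_cases hb : BddBelow {r : ℤ | ∃ F : GradedFreeRes (edgeIdealH k E),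
      ∀ (i : ℕ) (j : Fin (F.b i)), F.D i j - (i : ℤ) ≤ r}
  · have := csInf_le hb hmem
    linarith
  · rw [Int.csInf_of_not_bddBelow hb]
    norm_num
end
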